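/- Let ω be an irrational number of bounded type and let l ∈ ℕ. For every κ > 0 there exist a 1-periodic C^l function v : ℝ → ℝ and a sequence (v_n) of 1-periodic C^l functions v_n : ℝ → ℝ such that: (i) the Lyapunov exponent of the Schrödinger cocycle satisfies L(S_v) ≥ κ; (ii) for every n, L(S_{v_n}) = 0, i.e. the sequence (1/m)∫₀¹ log‖S_{v_n}^m(x)‖ dx tends to 0 as m → ∞; and (iii) ‖v_n − v‖_{C^l} → 0 as n → ∞. -/

import Mathlib

open Real MeasureTheory Filter

/-- Operator norm of a 2×2 real matrix, acting on Euclidean space. -/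
noncomputable def opNorm (A : Matrix (Fin 2) (Fin 2) ℝ) : ℝ :=
  ‖(Matrix.toEuclideanCLM (𝕜 := ℝ) A : EuclideanSpace ℝ (Fin 2) →L[ℝ] EuclideanSpace ℝ (Fin 2))‖

/-- Iterates of the quasi-periodic cocycle: A^n(x) = A(x+(n-1)ω)⋯A(x+ω)A(x). -/
noncomputable def cocycle (ω : ℝ) (A : ℝ → Matrix (Fin 2) (Fin 2) ℝ) :
    ℕ → ℝ → Matrix (Fin 2) (Fin 2) ℝ
  | 0, _ => 1
  | n + 1, x => A (x + n * ω) * cocycle ω A n x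

/-- Finite Lyapunov exponents L_n(A) = (1/n) ∫₀¹ log ‖A^n(x)‖ dx. -/
noncomputable def LEn (ω : ℝ) (A : ℝ → Matrix (Fin 2) (Fin 2) ℝ) (n : ℕ) : ℝ :=
  (1 / n) * ∫ x in (0:ℝ)..1, Real.log (opNorm (cocycle ω A n x))

/-- The Schrödinger cocycle S_v(x) = [[v(x), -1],[1,0]]. -/
def SchrodingerCocycle (v : ℝ → ℝ) (x : ℝ) : Matrix (Fin 2) (Fin 2) ℝ := !![v x, -1; 1, 0]

/-- The denominators of the continued fraction convergents of ω. -/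
noncomputable def cfDen (ω : ℝ) (k : ℕ) : ℝ := (GenContFract.of ω).dens k


/-- `u` is `C^l` and its derivatives are controlled by its values. -/
def PB (l : ℕ) (Λ : ℝ) (u : ℝ → ℝ) : Prop :=
  ContDiff ℝ l u ∧ ∀ i ≤ l, ∀ x, |iteratedDeriv i u x| ≤ Λ ^ i * u x

namespace PB
variable {l : ℕ} {Λ M : ℝ} {u v : ℝ → ℝ}

lemma nonneg (h : PB l Λ u) (x : ℝ) : 0 ≤ u x := by
  have := h.2 0 (Nat.zero_le _) x
  simp only [iteratedDeriv_zero, pow_zero, one_mul] at this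
  exact (abs_nonneg _).trans this

lemma mono (h : PB l Λ u) (h0 : 0 ≤ Λ) (hM : Λ ≤ M) : PB l M u := by
  refine ⟨h.1, fun i hi x => (h.2 i hi x).trans ?_⟩
  have := h.nonneg x
  gcongr

lemma const {c : ℝ} (hc : 0 ≤ c) (h0 : 0 ≤ Λ) : PB l Λ (fun _ => c) := by
  refine ⟨contDiff_const, fun i hi x => ?_⟩
  rw [iteratedDeriv_const]
  split_ifs with h
  · subst h; simp [abs_of_nonneg hc]
  · simp; positivity

lemma mul (hu : PB l Λ u) (hv : PB l M v) (h0 : 0 ≤ Λ) (h1 : 0 ≤ M) :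
    PB l (Λ + M) (fun x => u x * v x) := by
  refine ⟨hu.1.mul hv.1, fun i hi x => ?_⟩
  have hi' : (i : WithTop ℕ∞) ≤ (l : WithTop ℕ∞) := by exact_mod_cast hi
  have e := iteratedDeriv_mul (n := i) (x := x) (f := u) (g := v)
    ((hu.1.of_le hi').contDiffAt) ((hv.1.of_le hi').contDiffAt)
  change |iteratedDeriv i (u * v) x| ≤ _
  rw [e, add_pow, Finset.sum_mul]
  refine (Finset.abs_sum_le_sum_abs _ _).trans (Finset.sum_le_sum fun j hj => ?_)
  have hj' : j ≤ i := by simpa [Nat.lt_succ_iff] using hj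
  rw [abs_mul, abs_mul, Nat.abs_cast]
  have a := hu.2 j (hj'.trans hi) x
  have b := hv.2 (i - j) ((Nat.sub_le _ _).trans hi) x
  have := hu.nonneg x
  have := hv.nonneg x
  calc (i.choose j : ℝ) * |iteratedDeriv j u x| * |iteratedDeriv (i - j) v x|
      ≤ (i.choose j : ℝ) * (Λ ^ j * u x) * (M ^ (i - j) * v x) := by gcongr
    _ = _ := by ring

lemma shift (hu : PB l Λ u) (s : ℝ) : PB l Λ (fun x => u (x + s)) := by
  refine ⟨hu.1.comp (contDiff_id.add contDiff_const), fun i hi x => ?_⟩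
  rw [iteratedDeriv_comp_add_const]
  exact hu.2 i hi _

lemma cmul (hu : PB l Λ u) (h0 : 0 ≤ Λ) {c : ℝ} (hc : 0 ≤ c) : PB l Λ (fun x => c * u x) := by
  simpa using (PB.const (l := l) hc le_rfl).mul hu le_rfl h0

lemma pow (hu : PB l Λ u) (h0 : 0 ≤ Λ) (K : ℕ) : PB l (K * Λ) (fun x => u x ^ K) := by
  induction K with
  | zero => simpa using PB.const (l := l) (zero_le_one) (le_refl (0:ℝ))
  | succ K ih =>
    have := ih.mul hu (by positivity) h0
    simp only [← pow_succ] at this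
    convert this using 1
    push_cast; ring

lemma inv (hu : PB l Λ u) (h0 : 0 ≤ Λ) (hpos : ∀ x, 0 < u x) :
    PB l ((2 * (l + 1) : ℝ) * Λ) (fun x => (u x)⁻¹) := by
  have hne : ∀ x, u x ≠ 0 := fun x => (hpos x).ne'
  have hc : ContDiff ℝ l (fun x => (u x)⁻¹) := hu.1.inv hne
  refine ⟨hc, fun i => ?_⟩
  induction i using Nat.strong_induction_on with
  | _ i ih =>
  intro hi x
  rcases Nat.eq_zero_or_pos i with rfl | hipos
  · simp [abs_of_pos (hpos x)]
  have hi' : (i : WithTop ℕ∞) ≤ (l : WithTop ℕ∞) := by exact_mod_cast hi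
  have e := iteratedDeriv_mul (n := i) (x := x) (f := fun x => (u x)⁻¹) (g := u)
    ((hc.of_le hi').contDiffAt) ((hu.1.of_le hi').contDiffAt)
  have e1 : (fun x => (u x)⁻¹) * u = fun _ => (1 : ℝ) := by
    funext y; simp [hne y]
  rw [e1, iteratedDeriv_const, if_neg hipos.ne', Finset.sum_range_succ] at e
  simp only [Nat.choose_self, Nat.cast_one, one_mul, Nat.sub_self, iteratedDeriv_zero] at e
  set C : ℝ := 2 * (l + 1) with hC
  have hCp : 0 < C := by positivity
  set g := fun x => (u x)⁻¹ with hg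
  have gx : 0 < g x := inv_pos.2 (hpos x)
  have gu : g x * u x = 1 := by simp [hg, hne x]
  have b1 : |iteratedDeriv i g x * u x| ≤ ∑ j ∈ Finset.range i, (i.choose j : ℝ) * C ^ j * Λ ^ i := by
    have : iteratedDeriv i g x * u x = - ∑ j ∈ Finset.range i,
      (i.choose j : ℝ) * iteratedDeriv j g x * iteratedDeriv (i - j) u x := by linarith
    rw [this, abs_neg]
    refine (Finset.abs_sum_le_sum_abs _ _).trans (Finset.sum_le_sum fun j hj => ?_)
    have hj' : j < i := by simpa using hj
    rw [abs_mul, abs_mul, Nat.abs_cast]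
    have a := ih j hj' (hj'.le.trans hi) x
    have b := hu.2 (i - j) ((Nat.sub_le _ _).trans hi) x
    have := (hpos x).le
    calc (i.choose j : ℝ) * |iteratedDeriv j g x| * |iteratedDeriv (i - j) u x|
        ≤ (i.choose j : ℝ) * ((C * Λ) ^ j * g x) * (Λ ^ (i - j) * u x) := by gcongr
      _ = (i.choose j : ℝ) * C ^ j * (Λ ^ j * Λ ^ (i - j)) * (g x * u x) := by rw [mul_pow]; ring
      _ = _ := by rw [gu, ← pow_add, Nat.add_sub_cancel' hj'.le]; ring
  have b2 : ∑ j ∈ Finset.range i, (i.choose j : ℝ) * C ^ j = (C + 1) ^ i - C ^ i := by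
    rw [add_pow, Finset.sum_range_succ]; simp
    exact Finset.sum_congr rfl fun j _ => by ring
  have b3 : (C + 1) ^ i ≤ 2 * C ^ i := by
    have bern := one_add_mul_le_pow (a := -(1 / (C + 1))) (by
      have : 1 / (C + 1) ≤ 1 := by rw [div_le_one] <;> linarith
      linarith) i
    have e2 : 1 + -(1 / (C + 1)) = C / (C + 1) := by field_simp; ring
    rw [e2, div_pow] at bern
    have : (1:ℝ) / 2 ≤ 1 + (i:ℝ) * -(1 / (C + 1)) := by
      have hil : (i : ℝ) ≤ l := by exact_mod_cast hi
      have : (i : ℝ) * (1 / (C + 1)) ≤ 1 / 2 := by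
        rw [mul_one_div, div_le_div_iff₀ (by linarith) (by norm_num)]; linarith
      linarith
    have h3 := this.trans bern
    rw [div_le_div_iff₀ (by norm_num) (by positivity)] at h3
    linarith
  rw [← Finset.sum_mul, b2] at b1
  have b4 : |iteratedDeriv i g x| * u x ≤ (C * Λ) ^ i := by
    rw [abs_mul, abs_of_pos (hpos x)] at b1
    refine b1.trans ?_
    have hmp : (C * Λ) ^ i = C ^ i * Λ ^ i := mul_pow _ _ _
    rw [hmp]
    have : 0 ≤ Λ ^ i := by positivity
    have : (C + 1) ^ i - C ^ i ≤ C ^ i := by linarith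
    exact mul_le_mul_of_nonneg_right this (by positivity)
  calc |iteratedDeriv i g x| = |iteratedDeriv i g x| * u x * g x := by rw [mul_assoc, mul_comm (u x), gu, mul_one]
    _ ≤ _ := by gcongr

lemma div (hu : PB l Λ u) (hv : PB l M v) (h0 : 0 ≤ Λ) (h1 : 0 ≤ M) (hpos : ∀ x, 0 < v x) :
    PB l (Λ + (2 * (l + 1) : ℝ) * M) (fun x => u x / v x) := by
  simpa [div_eq_mul_inv] using hu.mul (hv.inv h1 hpos) h0 (by positivity)

lemma pow_le_aux {t s : ℝ} {i : ℕ} (ht : 0 ≤ t) (his : i ≤ l) (hs : (l : ℝ) ≤ s) :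
    t ^ i ≤ 1 + exp (s * (t - 1)) := by
  rcases le_total t 1 with h | h
  · have := pow_le_one₀ ht h (n := i)
    have := exp_pos (s * (t - 1))
    linarith
  · have h1 : t ≤ exp (t - 1) := by have := add_one_le_exp (t - 1); linarith
    calc t ^ i ≤ t ^ l := pow_le_pow_right₀ h his
      _ ≤ exp (t - 1) ^ l := by gcongr
      _ = exp (l * (t - 1)) := by rw [← exp_nat_mul]
      _ ≤ exp (s * (t - 1)) := by
        apply exp_le_exp.2; apply mul_le_mul_of_nonneg_right hs; linarith
      _ ≤ _ := by linarith

lemma tsum {ι : Type*} {u : ι → ℝ → ℝ} {ℓ b : ι → ℝ} {θ K : ℝ} (hΛ : 0 ≤ Λ)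
    (hℓ : ∀ p, 1 ≤ ℓ p) (hθ : 0 < θ) (hK : 0 < K) (hKθ : (l : ℝ) ≤ θ * K)
    (hu : ∀ p, PB l (Λ * ℓ p) (u p)) (hb : ∀ p x, exp (θ * ℓ p) * u p x ≤ b p)
    (hs : Summable b) (hlow : ∀ x, exp (-(θ * K)) * ∑' p, b p ≤ ∑' p, u p x) :
    PB l (2 * Λ * K) (fun x => ∑' p, u p x) := by
  have hub : ∀ p x, u p x ≤ b p := fun p x => by
    have := (hu p).nonneg x
    have h1 : 1 ≤ exp (θ * ℓ p) := one_le_exp (mul_nonneg hθ.le (by linarith [hℓ p]))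
    nlinarith [hb p x]
  have key : ∀ i ≤ l, ∀ p x, ‖iteratedDeriv i (u p) x‖ ≤
      (Λ * K) ^ i * (u p x + exp (-(θ * K)) * b p) := by
    intro i hi p x
    have hn := (hu p).nonneg x
    have h1 := (hu p).2 i hi x
    have hl := hℓ p
    have h2 := pow_le_aux (l := l) (t := ℓ p / K) (s := θ * K) (by positivity) hi hKθ
    have h3 : θ * K * (ℓ p / K - 1) = θ * ℓ p + -(θ * K) := by field_simp; ring
    rw [h3, exp_add] at h2
    have e : (Λ * ℓ p) ^ i = (Λ * K) ^ i * (ℓ p / K) ^ i := by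
      rw [← mul_pow]; congr 1; field_simp
    rw [Real.norm_eq_abs]
    refine h1.trans ?_
    rw [e, mul_assoc]
    gcongr
    calc (ℓ p / K) ^ i * u p x ≤ (1 + exp (θ * ℓ p) * exp (-(θ * K))) * u p x := by gcongr
      _ = u p x + exp (-(θ * K)) * (exp (θ * ℓ p) * u p x) := by ring
      _ ≤ _ := by have := hb p x; gcongr
  have key2 : ∀ (i : ℕ) (p : ι) (x : ℝ), (i : ℕ∞) ≤ (l : ℕ∞) → ‖iteratedFDeriv ℝ i (u p) x‖ ≤
      (Λ * K) ^ i * ((1 + exp (-(θ * K))) * b p) := by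
    intro i p x hi
    rw [norm_iteratedFDeriv_eq_norm_iteratedDeriv]
    refine (key i (by exact_mod_cast hi) p x).trans ?_
    have := hub p x
    gcongr
    linarith
  have hsum : ∀ k : ℕ, (k : ℕ∞) ≤ (l : ℕ∞) →
      Summable (fun p => (Λ * K) ^ k * ((1 + exp (-(θ * K))) * b p)) := fun k _ =>
    (hs.mul_left _).mul_left _
  have hcd : ∀ p, ContDiff ℝ ((l : ℕ∞) : WithTop ℕ∞) (u p) := fun p => by exact_mod_cast (hu p).1
  have hS : ∀ x, Summable (fun p => u p x) := fun x =>
    Summable.of_nonneg_of_le (fun p => (hu p).nonneg x) (fun p => hub p x) hs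
  refine ⟨by exact_mod_cast contDiff_tsum hcd hsum key2, fun i hi x => ?_⟩
  rcases Nat.eq_zero_or_pos i with rfl | hipos
  · simp only [iteratedDeriv_zero, pow_zero, one_mul]
    rw [abs_of_nonneg (tsum_nonneg fun p => (hu p).nonneg x)]
  have e := iteratedFDeriv_tsum_apply hcd hsum key2 (k := i) (by exact_mod_cast hi) x
  have hS2 : Summable (fun p => (Λ * K) ^ i * (u p x + exp (-(θ * K)) * b p)) :=
    ((hS x).add (hs.mul_left _)).mul_left _
  have : |iteratedDeriv i (fun x => ∑' p, u p x) x| ≤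
      ∑' p, (Λ * K) ^ i * (u p x + exp (-(θ * K)) * b p) := by
    rw [← Real.norm_eq_abs, ← norm_iteratedFDeriv_eq_norm_iteratedDeriv, e]
    refine tsum_of_norm_bounded hS2.hasSum fun p => ?_
    rw [norm_iteratedFDeriv_eq_norm_iteratedDeriv]
    exact key i hi p x
  refine this.trans ?_
  rw [tsum_mul_left, Summable.tsum_add (hS x) (hs.mul_left _), tsum_mul_left]
  have hU : 0 ≤ ∑' p, u p x := tsum_nonneg fun p => (hu p).nonneg x
  have h2 : (2:ℝ) ≤ 2 ^ i := by
    calc (2:ℝ) = 2 ^ 1 := by norm_num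
      _ ≤ 2 ^ i := pow_le_pow_right₀ (by norm_num) hipos
  calc (Λ * K) ^ i * (∑' p, u p x + exp (-(θ * K)) * ∑' p, b p)
      ≤ (Λ * K) ^ i * (2 * ∑' p, u p x) := by
        have := hlow x
        gcongr; linarith
    _ ≤ (Λ * K) ^ i * (2 ^ i * ∑' p, u p x) := by gcongr
    _ = _ := by rw [mul_assoc 2 Λ K, mul_pow 2]; ring

end PB

/-- Products over finite paths. -/
noncomputable def lprod (y : ℤ → ℝ) (p : List ℤ) : ℝ := (p.map y).prod

lemma lprod_nil (y : ℤ → ℝ) : lprod y [] = 1 := by simp [lprod]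
lemma lprod_cons (y : ℤ → ℝ) (j : ℤ) (p : List ℤ) : lprod y (j :: p) = y j * lprod y p := by
  simp [lprod]

lemma lprod_nonneg {y : ℤ → ℝ} (hy : ∀ j, 0 ≤ y j) (p : List ℤ) : 0 ≤ lprod y p := by
  induction p with
  | nil => simp [lprod_nil]
  | cons j p ih => rw [lprod_cons]; exact mul_nonneg (hy j) ih

lemma lprod_sum_aux {y : ℤ → ℝ} (hy : ∀ j, 0 ≤ y j) (hs : Summable y) (h : ∑' j, y j ≤ 1 / 2)
    (n : ℕ) : ∀ s : Finset (List ℤ), (∀ p ∈ s, p.length < n) → ∑ p ∈ s, lprod y p ≤ 2 := by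
  classical
  induction n with
  | zero =>
    intro s hs
    rw [Finset.sum_eq_zero] <;> [norm_num; skip]
    intro p hp; exact absurd (hs p hp) (by omega)
  | succ n ih =>
    intro s hs'
    set H : Finset ℤ := s.image (fun p => p.headD 0)
    set T : Finset (List ℤ) := (s.erase []).image List.tail
    have hT : ∑ p ∈ T, lprod y p ≤ 2 := by
      apply ih
      intro p hp
      simp only [T, Finset.mem_image, Finset.mem_erase] at hp
      obtain ⟨q, ⟨hq, hq2⟩, rfl⟩ := hp
      have := hs' q hq2
      cases q with
      | nil => exact absurd rfl hq
      | cons a q => simpa using this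
    have hsub : s ⊆ insert [] ((H ×ˢ T).image (fun z => z.1 :: z.2)) := by
      intro p hp
      cases p with
      | nil => simp
      | cons a q =>
        refine Finset.mem_insert_of_mem (Finset.mem_image.2 ⟨(a, q), ?_, rfl⟩)
        refine Finset.mem_product.2 ⟨Finset.mem_image.2 ⟨a :: q, hp, rfl⟩,
          Finset.mem_image.2 ⟨a :: q, Finset.mem_erase.2 ⟨by simp, hp⟩, rfl⟩⟩
    calc ∑ p ∈ s, lprod y p
        ≤ ∑ p ∈ insert [] ((H ×ˢ T).image (fun z => z.1 :: z.2)), lprod y p :=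
          Finset.sum_le_sum_of_subset_of_nonneg hsub fun p _ _ => lprod_nonneg hy p
      _ = 1 + ∑ p ∈ ((H ×ˢ T).image (fun z => z.1 :: z.2)), lprod y p := by
          rw [Finset.sum_insert (by simp), lprod_nil]
      _ = 1 + ∑ z ∈ H ×ˢ T, y z.1 * lprod y z.2 := by
          rw [Finset.sum_image]
          · simp_rw [lprod_cons]
          · rintro ⟨a, b⟩ _ ⟨c, d⟩ _ h; simpa using h
      _ = 1 + (∑ j ∈ H, y j) * ∑ p ∈ T, lprod y p := by
          rw [Finset.sum_mul_sum, Finset.sum_product]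
      _ ≤ 1 + (1 / 2) * 2 := by
          have a1 : ∑ j ∈ H, y j ≤ 1 / 2 := (hs.sum_le_tsum H fun j _ => hy j).trans h
          have a2 : 0 ≤ ∑ p ∈ T, lprod y p := Finset.sum_nonneg fun p _ => lprod_nonneg hy p
          gcongr
      _ = 2 := by norm_num

lemma lprod_summable {y : ℤ → ℝ} (hy : ∀ j, 0 ≤ y j) (hs : Summable y) (h : ∑' j, y j ≤ 1 / 2) :
    Summable (lprod y) ∧ ∑' p, lprod y p ≤ 2 := by
  have key : ∀ s : Finset (List ℤ), ∑ p ∈ s, lprod y p ≤ 2 := fun s => by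
    apply lprod_sum_aux hy hs h (s.sup List.length + 1) s
    intro p hp
    exact Nat.lt_succ_of_le (Finset.le_sup (f := List.length) hp)
  have h1 := summable_of_sum_le (fun p => lprod_nonneg hy p) key
  exact ⟨h1, h1.tsum_le_of_sum_le key⟩


abbrev M2 := Matrix (Fin 2) (Fin 2) ℝ

lemma opNorm_mul_le (A B : M2) : opNorm (A * B) ≤ opNorm A * opNorm B := by
  unfold opNorm; rw [map_mul]; exact norm_mul_le _ _

lemma opNorm_nonneg (A : M2) : 0 ≤ opNorm A := norm_nonneg _

lemma opNorm_continuous : Continuous opNorm := by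
  unfold opNorm
  apply Continuous.norm
  exact LinearMap.continuous_of_finiteDimensional
    ((Matrix.toEuclideanCLM (𝕜 := ℝ) (n := Fin 2)).toAlgEquiv.toLinearMap)

lemma opNorm_col (A : M2) (j : Fin 2) : √ (A 0 j ^ 2 + A 1 j ^ 2) ≤ opNorm A := by
  have h := (Matrix.toEuclideanCLM (𝕜 := ℝ) A).le_opNorm (EuclideanSpace.single j (1:ℝ))
  rw [PiLp.norm_single, norm_one, mul_one] at h
  refine le_trans (le_of_eq ?_) h
  rw [EuclideanSpace.norm_eq]
  simp [Fin.sum_univ_two, Matrix.ofLp_toEuclideanCLM]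

lemma opNorm_entry0 (A : M2) (j : Fin 2) : |A 0 j| ≤ opNorm A := by
  refine le_trans ?_ (opNorm_col A j)
  apply Real.abs_le_sqrt
  nlinarith [sq_nonneg (A 1 j)]

lemma one_le_opNorm {A : M2} (h : A.det = 1) : 1 ≤ opNorm A := by
  have h0 := opNorm_col A 0
  have h1 := opNorm_col A 1
  rw [Matrix.det_fin_two] at h
  have hp : √ (A 0 0 ^ 2 + A 1 0 ^ 2) * √ (A 0 1 ^ 2 + A 1 1 ^ 2) ≤ opNorm A * opNorm A :=
    mul_le_mul h0 h1 (sqrt_nonneg _) (opNorm_nonneg _)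
  have : 1 ≤ √ (A 0 0 ^ 2 + A 1 0 ^ 2) * √ (A 0 1 ^ 2 + A 1 1 ^ 2) := by
    rw [← sqrt_mul (by positivity)]
    apply Real.le_sqrt_of_sq_le
    nlinarith [sq_nonneg (A 0 0 * A 0 1 + A 1 0 * A 1 1)]
  nlinarith [opNorm_nonneg A]

lemma opNorm_le {A : M2} {C : ℝ} (hC : 0 ≤ C) (h : ∀ i j, |A i j| ≤ C) : opNorm A ≤ 2 * C := by
  refine ContinuousLinearMap.opNorm_le_bound _ (by positivity) fun v => ?_
  have e : ‖(Matrix.toEuclideanCLM (𝕜 := ℝ) A) v‖ ^ 2 =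
      (A 0 0 * v 0 + A 0 1 * v 1) ^ 2 + (A 1 0 * v 0 + A 1 1 * v 1) ^ 2 := by
    rw [EuclideanSpace.norm_sq_eq]
    simp [Fin.sum_univ_two, Matrix.ofLp_toEuclideanCLM, Matrix.mulVec, dotProduct]
  have e2 : ‖v‖ ^ 2 = v 0 ^ 2 + v 1 ^ 2 := by
    rw [EuclideanSpace.norm_sq_eq]; simp [Fin.sum_univ_two]
  apply le_of_sq_le_sq _ (by positivity)
  rw [mul_pow, e, e2]
  have s : ∀ i j, (A i j) ^ 2 ≤ C ^ 2 := fun i j => sq_le_sq' (abs_le.1 (h i j)).1 (abs_le.1 (h i j)).2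
  have aux : ∀ a b p q : ℝ, a ^ 2 ≤ C ^ 2 → b ^ 2 ≤ C ^ 2 →
      (a * p + b * q) ^ 2 ≤ 2 * C ^ 2 * (p ^ 2 + q ^ 2) := by
    intro a b p q ha hb
    nlinarith [sq_nonneg (a * p - b * q), mul_nonneg (sub_nonneg.2 ha) (sq_nonneg p),
      mul_nonneg (sub_nonneg.2 hb) (sq_nonneg q)]
  nlinarith [aux _ _ (v 0) (v 1) (s 0 0) (s 0 1), aux _ _ (v 0) (v 1) (s 1 0) (s 1 1)]

section coc
variable {ω : ℝ} {v : ℝ → ℝ}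

lemma cocycle_zero (x : ℝ) : cocycle ω (SchrodingerCocycle v) 0 x = 1 := rfl

lemma cocycle_succ (n : ℕ) (x : ℝ) : cocycle ω (SchrodingerCocycle v) (n + 1) x =
    SchrodingerCocycle v (x + n * ω) * cocycle ω (SchrodingerCocycle v) n x := rfl

lemma coc_row0 (n : ℕ) (x : ℝ) (j : Fin 2) : cocycle ω (SchrodingerCocycle v) (n + 1) x 0 j =
    v (x + n * ω) * cocycle ω (SchrodingerCocycle v) n x 0 j
      - cocycle ω (SchrodingerCocycle v) n x 1 j := by
  rw [cocycle_succ, Matrix.mul_apply]; simp [Fin.sum_univ_two, SchrodingerCocycle]; ring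

lemma coc_row1 (n : ℕ) (x : ℝ) (j : Fin 2) : cocycle ω (SchrodingerCocycle v) (n + 1) x 1 j =
    cocycle ω (SchrodingerCocycle v) n x 0 j := by
  rw [cocycle_succ, Matrix.mul_apply]; simp [Fin.sum_univ_two, SchrodingerCocycle]

lemma coc_det (n : ℕ) (x : ℝ) : (cocycle ω (SchrodingerCocycle v) n x).det = 1 := by
  induction n with
  | zero => simp [cocycle_zero]
  | succ n ih => rw [cocycle_succ, Matrix.det_mul, ih]; simp [SchrodingerCocycle]

lemma coc_one_le (n : ℕ) (x : ℝ) : 1 ≤ opNorm (cocycle ω (SchrodingerCocycle v) n x) :=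
  one_le_opNorm (coc_det n x)

lemma coc_add (m n : ℕ) (x : ℝ) : cocycle ω (SchrodingerCocycle v) (m + n) x =
    cocycle ω (SchrodingerCocycle v) n (x + m * ω) * cocycle ω (SchrodingerCocycle v) m x := by
  induction n with
  | zero => simp [cocycle_zero]
  | succ n ih =>
    rw [← add_assoc, cocycle_succ, ih, cocycle_succ, mul_assoc]
    congr 2; push_cast; ring

lemma coc_continuous (hv : Continuous v) (n : ℕ) :
    Continuous (fun x => cocycle ω (SchrodingerCocycle v) n x) := by
  induction n with
  | zero => simp only [cocycle_zero]; exact continuous_const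
  | succ n ih =>
    simp only [cocycle_succ]
    refine Continuous.matrix_mul ?_ ih
    have : Continuous (SchrodingerCocycle v) := by
      unfold SchrodingerCocycle
      refine continuous_matrix fun i j => ?_
      fin_cases i <;> fin_cases j <;> simp <;> fun_prop
    exact this.comp (by fun_prop)

lemma coc_periodic (hv : Function.Periodic v 1) (n : ℕ) :
    Function.Periodic (fun x => cocycle ω (SchrodingerCocycle v) n x) 1 := by
  intro x
  induction n with
  | zero => simp [cocycle_zero]
  | succ n ih =>
    simp only [cocycle_succ] at ih ⊢
    rw [ih]
    have : v (x + 1 + n * ω) = v (x + n * ω) := by rw [← hv (x + n * ω)]; congr 1; ring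
    simp [SchrodingerCocycle, this]

lemma logcoc_continuous (hv : Continuous v) (n : ℕ) :
    Continuous (fun x => log (opNorm (cocycle ω (SchrodingerCocycle v) n x))) :=
  (opNorm_continuous.comp (coc_continuous hv n)).log fun x => by
    have := coc_one_le (ω := ω) (v := v) n x; simp only [Function.comp_apply]; positivity

lemma coc_bound {B : ℝ} (hB : 1 ≤ B) (hv : ∀ x, |v x| ≤ B) (n : ℕ) (x : ℝ) :
    opNorm (cocycle ω (SchrodingerCocycle v) n x) ≤ (2 * B) ^ (n + 1) := by
  induction n with
  | zero =>
    rw [cocycle_zero, zero_add, pow_one]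
    refine (opNorm_le (C := 1) zero_le_one ?_).trans (by linarith)
    intro i j; fin_cases i <;> fin_cases j <;> simp
  | succ n ih =>
    rw [cocycle_succ, pow_succ' _ (n + 1)]
    refine (opNorm_mul_le _ _).trans ?_
    refine mul_le_mul (opNorm_le (by linarith) ?_) ih (opNorm_nonneg _) (by positivity)
    intro i j
    have := hv (x + n * ω)
    fin_cases i <;> fin_cases j <;> simp [SchrodingerCocycle] <;> linarith

lemma periodic_integral_shift {g : ℝ → ℝ} (hp : Function.Periodic g 1) (s : ℝ) :
    ∫ x in (0:ℝ)..1, g (x + s) = ∫ x in (0:ℝ)..1, g x := by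
  rw [intervalIntegral.integral_comp_add_right g s]
  have := hp.intervalIntegral_add_eq (0 + s) 0
  simpa [add_comm] using this

lemma LE_exists (hc : Continuous v) (hp : Function.Periodic v 1) {κ : ℝ}
    (h : ∀ m : ℕ, 1 ≤ m → κ ≤ LEn ω (SchrodingerCocycle v) m) :
    ∃ L : ℝ, κ ≤ L ∧ Tendsto (fun m => LEn ω (SchrodingerCocycle v) m) atTop (nhds L) := by
  set a : ℕ → ℝ := fun m => ∫ x in (0:ℝ)..1, log (opNorm (cocycle ω (SchrodingerCocycle v) m x))
    with ha
  have hii : ∀ m s, IntervalIntegrable (fun x => log (opNorm (cocycle ω (SchrodingerCocycle v) m (x + s))))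
      volume 0 1 := fun m s =>
    ((logcoc_continuous hc m).comp (continuous_id.add continuous_const)).intervalIntegrable _ _
  have hii0 : ∀ m, IntervalIntegrable (fun x => log (opNorm (cocycle ω (SchrodingerCocycle v) m x)))
      volume 0 1 := fun m => (logcoc_continuous hc m).intervalIntegrable _ _
  have hsub : Subadditive a := by
    intro m n
    have e : a n = ∫ x in (0:ℝ)..1, log (opNorm (cocycle ω (SchrodingerCocycle v) n (x + m * ω))) :=
      (periodic_integral_shift (g := fun x => log (opNorm (cocycle ω (SchrodingerCocycle v) n x)))
        (fun x => by
          have := coc_periodic (ω := ω) hp n x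
          simp only at this ⊢; rw [this]) _).symm
    rw [e]
    simp only [ha]
    rw [← intervalIntegral.integral_add (hii0 m) (hii n _)]
    refine intervalIntegral.integral_mono_on zero_le_one (hii0 _)
      ((hii0 m).add (hii n _)) fun x _ => ?_
    have h1 := coc_one_le (ω := ω) (v := v) n (x + m * ω)
    have h2 := coc_one_le (ω := ω) (v := v) m x
    have h3 := coc_one_le (ω := ω) (v := v) (m + n) x
    rw [add_comm (log _), ← log_mul (by positivity) (by positivity)]
    apply log_le_log (by positivity)
    rw [coc_add]
    exact opNorm_mul_le _ _
  have hbdd : BddBelow (Set.range fun n => a n / n) := by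
    refine ⟨0, ?_⟩
    rintro _ ⟨n, rfl⟩
    refine div_nonneg (intervalIntegral.integral_nonneg zero_le_one fun x _ => ?_) (by positivity)
    exact log_nonneg (coc_one_le _ _)
  have ht := hsub.tendsto_lim hbdd
  have e : (fun n : ℕ => a n / n) = fun m => LEn ω (SchrodingerCocycle v) m := by
    funext m; unfold LEn; simp only [ha]; ring
  rw [e] at ht
  refine ⟨hsub.lim, ge_of_tendsto ht ?_, ht⟩
  filter_upwards [eventually_ge_atTop 1] with m hm using h m hm

lemma LE_limit {W : ℕ → ℝ → ℝ} (hW : ∀ n, Continuous (W n)) {B κ : ℝ}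
    (hc : Continuous v) (hp : Function.Periodic v 1)
    (hB : ∀ n x, |W n x| ≤ B) (hlim : ∀ x, Tendsto (fun n => W n x) atTop (nhds (v x)))
    (h : ∀ n (m : ℕ), 1 ≤ m → κ ≤ LEn ω (SchrodingerCocycle (W n)) m) :
    ∃ L : ℝ, κ ≤ L ∧ Tendsto (fun m => LEn ω (SchrodingerCocycle v) m) atTop (nhds L) := by
  refine LE_exists hc hp fun m hm => ?_
  have hcoc : ∀ m x, Tendsto (fun n => cocycle ω (SchrodingerCocycle (W n)) m x) atTop
      (nhds (cocycle ω (SchrodingerCocycle v) m x)) := by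
    intro m x
    refine tendsto_pi_nhds.2 fun i => ?_
    refine tendsto_pi_nhds.2 fun j => ?_
    induction m generalizing i with
    | zero => simp only [cocycle_zero]; exact tendsto_const_nhds
    | succ m ih =>
      fin_cases i
      · simp only [Fin.zero_eta, coc_row0]
        exact ((hlim _).mul (ih 0)).sub (ih 1)
      · simp only [Fin.mk_one, coc_row1]
        exact ih 0
  have ht : Tendsto (fun n => LEn ω (SchrodingerCocycle (W n)) m) atTop
      (nhds (LEn ω (SchrodingerCocycle v) m)) := by
    unfold LEn
    refine Tendsto.const_mul _ ?_
    set B' := max B 1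
    have hB' : 1 ≤ B' := le_max_right _ _
    refine intervalIntegral.tendsto_integral_filter_of_dominated_convergence
      (fun _ => log ((2 * B') ^ (m + 1))) ?_ ?_ ?_ ?_
    · exact Eventually.of_forall fun n => (logcoc_continuous (hW n) m).aestronglyMeasurable
    · refine Eventually.of_forall fun n => ae_of_all _ fun x _ => ?_
      have h1 := coc_one_le (ω := ω) (v := W n) m x
      rw [norm_eq_abs, abs_of_nonneg (log_nonneg h1)]
      exact log_le_log (by positivity)
        (coc_bound hB' (fun x => (hB n x).trans (le_max_left _ _)) m x)
    · simp
    · refine ae_of_all _ fun x _ => ?_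
      have h1 := coc_one_le (ω := ω) (v := v) m x
      exact ((opNorm_continuous.tendsto _).comp (hcoc m x)).log (by positivity)
  exact ge_of_tendsto ht (Eventually.of_forall fun n => h n m hm)

lemma LE_zero {f V : ℝ → ℝ} {a F : ℝ} (ha : 0 < a) (hfa : ∀ x, a ≤ f x) (hF : ∀ x, f x ≤ F)
    (hV : ∀ x, V x * f x = f (x + ω) + f (x - ω)) :
    Tendsto (fun m => LEn ω (SchrodingerCocycle V) m) atTop (nhds 0) := by
  have hf : ∀ x, 0 < f x := fun x => ha.trans_le (hfa x)
  have hFp : 0 < F := (hf 0).trans_le (hF 0)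
  have haF : a ≤ F := (hfa 0).trans (hF 0)
  set E := 1 / a + 2 * F / a ^ 2 with hE
  have hEp : 0 < E := by positivity
  have hE1 : 1 / a ≤ E := by rw [hE]; have : 0 < 2 * F / a ^ 2 := by positivity
                             linarith
  have key : ∀ (x : ℝ) (j : Fin 2) (m : ℕ),
      |cocycle ω (SchrodingerCocycle V) m x 0 j| ≤ f (x + m * ω) * (E * (1 + m)) ∧
      |cocycle ω (SchrodingerCocycle V) m x 1 j| ≤ F * (E * (1 + m)) ∧
      |cocycle ω (SchrodingerCocycle V) m x 0 j * f (x + m * ω - ω) -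
        cocycle ω (SchrodingerCocycle V) m x 1 j * f (x + m * ω)| ≤ 2 * F := by
    intro x j m
    have h1 : 1 ≤ a * E := by
      have := mul_le_mul_of_nonneg_left hE1 ha.le
      rwa [mul_one_div_cancel ha.ne'] at this
    have hone : ∀ i, |(1 : M2) i j| ≤ 1 := by intro i; rw [Matrix.one_apply]; split_ifs <;> simp
    induction m with
    | zero =>
      simp only [cocycle_zero, Nat.cast_zero, zero_mul, add_zero, mul_one]
      refine ⟨(hone 0).trans (h1.trans (by have := hfa x; gcongr)),
        (hone 1).trans (h1.trans (by gcongr)), ?_⟩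
      refine (abs_sub _ _).trans ?_
      rw [abs_mul, abs_mul, abs_of_pos (hf _), abs_of_pos (hf _)]
      have a1 : |(1 : M2) 0 j| * f (x - ω) ≤ 1 * F := mul_le_mul (hone 0) (hF _) (hf _).le zero_le_one
      have a2 : |(1 : M2) 1 j| * f x ≤ 1 * F := mul_le_mul (hone 1) (hF _) (hf _).le zero_le_one
      linarith
    | succ m ih =>
      obtain ⟨i1, i2, i3⟩ := ih
      rw [coc_row0, coc_row1]
      set y := cocycle ω (SchrodingerCocycle V) m x 0 j
      set z := cocycle ω (SchrodingerCocycle V) m x 1 j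
      have e1 : x + ((m + 1 : ℕ) : ℝ) * ω - ω = x + m * ω := by push_cast; ring
      have e2 : x + ((m + 1 : ℕ) : ℝ) * ω = x + m * ω + ω := by push_cast; ring
      rw [e1, e2]
      set t := x + m * ω
      have hv := hV t
      have ec : (V t * y - z) * f t - y * f (t + ω) = y * f (t - ω) - z * f t := by
        linear_combination y * hv
      refine ⟨?_, ?_, by rw [ec]; exact i3⟩
      · have e3 : (V t * y - z) = ((y * f (t - ω) - z * f t) + y * f (t + ω)) / f t := by
          rw [eq_div_iff (hf t).ne']; linarith
        rw [e3, abs_div, abs_of_pos (hf t), div_le_iff₀ (hf t)]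
        refine (abs_add_le _ _).trans ?_
        rw [abs_mul y, abs_of_pos (hf (t + ω))]
        have b1 : |y| * f (t + ω) ≤ f t * (E * (1 + m)) * f (t + ω) :=
          mul_le_mul_of_nonneg_right i1 (hf _).le
        have b2 : 2 * F ≤ f (t + ω) * E * f t := by
          have : 2 * F ≤ a * E * a := by
            rw [hE]; field_simp; nlinarith
          refine this.trans ?_
          have := hfa t
          have := hfa (t + ω)
          have := hf (t + ω)
          gcongr
        push_cast
        nlinarith
      · refine i1.trans ?_
        have := hF t
        push_cast
        have : (0:ℝ) ≤ m := by positivity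
        gcongr; linarith
  have hbd : ∀ m : ℕ, |LEn ω (SchrodingerCocycle V) m| ≤
      (log (2 * F * E) + log (1 + m)) / m := by
    intro m
    unfold LEn
    rw [abs_mul, abs_of_nonneg (by positivity), one_div, div_eq_inv_mul]
    refine mul_le_mul_of_nonneg_left ?_ (by positivity)
    have := intervalIntegral.norm_integral_le_of_norm_le_const (a := 0) (b := 1)
      (f := fun x => log (opNorm (cocycle ω (SchrodingerCocycle V) m x)))
      (C := log (2 * F * E) + log (1 + m)) (fun x _ => ?_)
    · simpa using this
    · have h1 := coc_one_le (ω := ω) (v := V) m x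
      rw [norm_eq_abs, abs_of_nonneg (log_nonneg h1), ← log_mul (by positivity) (by positivity)]
      apply log_le_log (by positivity)
      have : opNorm (cocycle ω (SchrodingerCocycle V) m x) ≤ 2 * (F * (E * (1 + m))) := by
        apply opNorm_le (by positivity)
        intro i j
        obtain ⟨k1, k2, -⟩ := key x j m
        fin_cases i
        · exact k1.trans (by have := hF (x + m * ω); gcongr)
        · exact k2
      linarith
  refine squeeze_zero_norm hbd ?_
  have t1 : Tendsto (fun m : ℕ => log (2 * F * E) / (m : ℝ)) atTop (nhds 0) :=
    tendsto_const_div_atTop_nhds_zero_nat _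
  have t2 : Tendsto (fun m : ℕ => log (1 + (m:ℝ)) / (m : ℝ)) atTop (nhds 0) := by
    have h1 : Tendsto (fun x : ℝ => log x / x) atTop (nhds 0) := by
      simpa using (isLittleO_log_id_atTop.tendsto_div_nhds_zero)
    have h2 : Tendsto (fun m : ℕ => (1 + (m:ℝ))) atTop atTop :=
      tendsto_atTop_add_const_left _ _ tendsto_natCast_atTop_atTop
    have h3 := h1.comp h2
    have h4 := h3.const_mul 2
    rw [mul_zero] at h4
    refine squeeze_zero' (Eventually.of_forall fun m => ?_) ?_ h4
    · exact div_nonneg (log_nonneg (by have : (0:ℝ) ≤ m := by positivity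
                                       linarith)) (by positivity)
    · filter_upwards [eventually_ge_atTop 1] with m hm
      have hm' : (1:ℝ) ≤ m := by exact_mod_cast hm
      have : 0 ≤ log (1 + (m:ℝ)) := log_nonneg (by linarith)
      simp only [Function.comp_apply]
      rw [mul_div_assoc', div_le_div_iff₀ (by linarith) (by linarith)]
      nlinarith
  simpa [add_div] using t1.add t2

/-- The top left entry of the cocycle. -/
noncomputable def dir (ω : ℝ) (v : ℝ → ℝ) (m : ℕ) (x : ℝ) : ℝ :=
  cocycle ω (SchrodingerCocycle v) m x 0 0

lemma dir_continuous (hv : Continuous v) (m : ℕ) : Continuous (dir ω v m) :=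
  (continuous_apply_apply (0 : Fin 2) (0 : Fin 2)).comp (coc_continuous hv m)

lemma loss_pointwise {W U F : ℝ → ℝ} (hUW : ∀ x, U x ≤ W x) (hF : ∀ x, 0 < F x)
    (hU : ∀ x, U x * F x - F (x + ω) - F (x - ω) = 1) (x : ℝ) (m : ℕ) :
    0 < dir ω W m x ∧ 
    dir ω W m x / ∏ k ∈ Finset.range m,
        (1 + (W (x + k * ω) - U (x + k * ω)) * F (x + k * ω)) ≤ dir ω U m x := by
  set P : ℕ → ℝ := fun m => ∏ k ∈ Finset.range m,
        (1 + (W (x + k * ω) - U (x + k * ω)) * F (x + k * ω)) with hP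
  have key : ∀ m : ℕ, 0 < cocycle ω (SchrodingerCocycle W) m x 0 0 ∧
      0 < P m ∧
      0 < cocycle ω (SchrodingerCocycle W) m x 0 0 * F (x + m * ω - ω) -
        cocycle ω (SchrodingerCocycle W) m x 1 0 * F (x + m * ω) ∧
      ∃ S B : ℝ, 1 / P m ≤ S ∧ 0 ≤ B ∧
        cocycle ω (SchrodingerCocycle U) m x 0 0 =
          S * cocycle ω (SchrodingerCocycle W) m x 0 0 + B * F (x + m * ω) ∧
        cocycle ω (SchrodingerCocycle U) m x 1 0 =
          S * cocycle ω (SchrodingerCocycle W) m x 1 0 + B * F (x + m * ω - ω) := by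
    intro m
    induction m with
    | zero =>
      simp only [cocycle_zero]
      refine ⟨by simp, by simp [hP], by simp [hF], 1, 0, by simp [hP], le_rfl, by simp, by simp⟩
    | succ m ih =>
      obtain ⟨i1, iP, i2, S, B, hS, hB, i3, i4⟩ := ih
      rw [coc_row0, coc_row1, coc_row0, coc_row1, i3, i4]
      have e1 : x + ((m + 1 : ℕ) : ℝ) * ω - ω = x + m * ω := by push_cast; ring
      have e2 : x + ((m + 1 : ℕ) : ℝ) * ω = x + m * ω + ω := by push_cast; ring
      have eP : P (m + 1) = P m * (1 + (W (x + m * ω) - U (x + m * ω)) * F (x + m * ω)) := by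
        simp only [hP, Finset.prod_range_succ]
      rw [e1, e2, eP]
      set w := cocycle ω (SchrodingerCocycle W) m x 0 0
      set z := cocycle ω (SchrodingerCocycle W) m x 1 0
      set t := x + m * ω
      have hu := hU t
      set δ := W t - U t with hδ
      have hδ0 : 0 ≤ δ := sub_nonneg.2 (hUW t)
      have hFt := hF t
      have hFt' := hF (t + ω)
      have hSp : 0 < S := lt_of_lt_of_le (by positivity) hS
      set R := (W t * w - z) * F t - w * F (t + ω) with hR
      have eR : R = w * (1 + δ * F t) + (w * F (t - ω) - z * F t) := by
        rw [hR, hδ]; linear_combination w * hu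
      have hfac : 0 < 1 + δ * F t := by positivity
      have hRw : w * (1 + δ * F t) ≤ R := by linarith
      have hRp : 0 < R := lt_of_lt_of_le (by positivity) hRw
      have hwR : w ≤ R := by
        have : 0 ≤ w * (δ * F t) := by positivity
        linarith
      have hw' : 0 < W t * w - z := by
        have : 0 < (W t * w - z) * F t := by
          have : 0 < w * F (t + ω) := by positivity
          linarith
        exact pos_of_mul_pos_left this hFt.le
      refine ⟨hw', by positivity, hRp, S - F t * (S * δ * w - B) / R,
        B + (S * δ * w - B) / R * w, ?_, ?_, ?_, ?_⟩
      · have h1 : S / (1 + δ * F t) ≤ S - F t * (S * δ * w - B) / R := by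
          rw [le_sub_iff_add_le, ← le_sub_iff_add_le', div_le_iff₀ hRp]
          have : S - S / (1 + δ * F t) = S * δ * F t / (1 + δ * F t) := by field_simp; ring
          rw [this, div_mul_eq_mul_div, le_div_iff₀ hfac]
          have a1 : S * δ * F t * (w * (1 + δ * F t)) ≤ S * δ * F t * R := by gcongr
          have a2 : 0 ≤ F t * B * (1 + δ * F t) := by positivity
          nlinarith
        refine le_trans ?_ h1
        rw [one_div, mul_inv, ← one_div, ← div_eq_mul_inv]
        gcongr
      · have : B + (S * δ * w - B) / R * w = (B * (R - w) + S * δ * w * w) / R := by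
          field_simp; ring
        rw [this]
        have : 0 ≤ R - w := by linarith
        positivity
      · have : (S - F t * (S * δ * w - B) / R) * (W t * w - z) +
          (B + (S * δ * w - B) / R * w) * F (t + ω) = S * (W t * w - z) + B * F (t + ω) -
            (S * δ * w - B) / R * R := by rw [hR]; ring
        rw [this, div_mul_cancel₀ _ hRp.ne', hδ]
        linear_combination B * hu
      · field_simp; ring
  obtain ⟨k1, k2, k3, S, B, hS, hB, k4, -⟩ := key m
  refine ⟨k1, ?_⟩
  change _ ≤ cocycle ω (SchrodingerCocycle U) m x 0 0
  rw [k4]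
  have : dir ω W m x / P m ≤ S * cocycle ω (SchrodingerCocycle W) m x 0 0 := by
    rw [div_eq_mul_one_div, mul_comm]
    exact mul_le_mul_of_nonneg_right hS k1.le
  have : 0 ≤ B * F (x + m * ω) := mul_nonneg hB (hF _).le
  linarith

lemma loss {W U F : ℝ → ℝ} (hW : Continuous W) (hUc : Continuous U) (hFc : Continuous F)
    (hWp : Function.Periodic W 1) (hUp : Function.Periodic U 1) (hFp : Function.Periodic F 1)
    (hUW : ∀ x, U x ≤ W x) (hF : ∀ x, 0 < F x)
    (hU : ∀ x, U x * F x - F (x + ω) - F (x - ω) = 1) {η : ℝ}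
    (hη : ∫ x in (0:ℝ)..1, log (1 + (W x - U x) * F x) ≤ η) (m : ℕ) :
    (∀ x, 0 < dir ω U m x) ∧
    (∫ x in (0:ℝ)..1, log (dir ω W m x)) - m * η ≤ ∫ x in (0:ℝ)..1, log (dir ω U m x) := by
  have hfac : ∀ x, 0 < 1 + (W x - U x) * F x := fun x => by
    have := mul_nonneg (sub_nonneg.2 (hUW x)) (hF x).le
    linarith
  have hpos : ∀ x, 0 < dir ω U m x := fun x => by
    obtain ⟨h1, h2⟩ := loss_pointwise hUW hF hU x m
    refine lt_of_lt_of_le (div_pos h1 (Finset.prod_pos fun k _ => hfac _)) h2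
  refine ⟨hpos, ?_⟩
  set g : ℝ → ℝ := fun x => log (1 + (W x - U x) * F x) with hg
  have hgc : Continuous g := by
    apply Continuous.log (by fun_prop)
    intro x; exact (hfac x).ne'
  have hgp : Function.Periodic g 1 := fun x => by simp only [hg]; rw [hWp x, hUp x, hFp x]
  have hWpos := fun x => (loss_pointwise hUW hF hU x m).1
  have i1 : IntervalIntegrable (fun x => log (dir ω W m x)) volume 0 1 :=
    ((dir_continuous hW m).log fun x => (hWpos x).ne').intervalIntegrable _ _
  have i2 : IntervalIntegrable (fun x => log (dir ω U m x)) volume 0 1 :=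
    ((dir_continuous hUc m).log fun x => (hpos x).ne').intervalIntegrable _ _
  have i3 : ∀ k : ℕ, IntervalIntegrable (fun x => g (x + k * ω)) volume 0 1 := fun k =>
    (hgc.comp (by fun_prop : Continuous fun x : ℝ => x + k * ω)).intervalIntegrable _ _
  have e : ∫ x in (0:ℝ)..1, ∑ k ∈ Finset.range m, g (x + k * ω) =
      m * ∫ x in (0:ℝ)..1, g x := by
    rw [intervalIntegral.integral_finsetSum fun k _ => i3 k]
    simp [periodic_integral_shift hgp]
  have i4 : IntervalIntegrable (fun x => ∑ k ∈ Finset.range m, g (x + k * ω)) volume 0 1 :=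
    Continuous.intervalIntegrable (by fun_prop) _ _
  have h1 : ∫ x in (0:ℝ)..1, (log (dir ω W m x) - ∑ k ∈ Finset.range m, g (x + k * ω)) ≤
      ∫ x in (0:ℝ)..1, log (dir ω U m x) := by
    refine intervalIntegral.integral_mono_on zero_le_one (i1.sub i4) i2 fun x _ => ?_
    obtain ⟨h1, h2⟩ := loss_pointwise hUW hF hU x m
    have hP : 0 < ∏ k ∈ Finset.range m,
        (1 + (W (x + k * ω) - U (x + k * ω)) * F (x + k * ω)) := Finset.prod_pos fun k _ => hfac _
    have := log_le_log (div_pos h1 hP) h2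
    rw [log_div h1.ne' hP.ne', log_prod fun k _ => (hfac _).ne'] at this
    exact this
  rw [intervalIntegral.integral_sub i1 i4, e] at h1
  have : (m:ℝ) * ∫ x in (0:ℝ)..1, g x ≤ m * η := by gcongr
  linarith

lemma LEn_ge_of_dir (hc : Continuous v) {κ : ℝ} {m : ℕ} (hm : 1 ≤ m)
    (hpos : ∀ x, 0 < dir ω v m x) (h : m * κ ≤ ∫ x in (0:ℝ)..1, log (dir ω v m x)) :
    κ ≤ LEn ω (SchrodingerCocycle v) m := by
  unfold LEn
  have hm' : (0:ℝ) < m := by exact_mod_cast hm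
  rw [one_div, ← div_eq_inv_mul, le_div_iff₀ hm', mul_comm]
  refine h.trans ?_
  refine intervalIntegral.integral_mono_on zero_le_one
    (((dir_continuous hc m).log fun x => (hpos x).ne').intervalIntegrable _ _)
    ((logcoc_continuous hc m).intervalIntegrable _ _) fun x _ => ?_
  apply log_le_log (hpos x)
  exact (le_abs_self _).trans (opNorm_entry0 _ 0)

lemma dir_const {κ : ℝ} (m : ℕ) (x : ℝ) :
    exp (κ * m) ≤ dir ω (fun _ => exp κ + exp (-κ)) m x := by
  have key : ∀ m : ℕ, exp (κ * m) ≤ cocycle ω (SchrodingerCocycle fun _ => exp κ + exp (-κ)) m x 0 0 ∧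
      cocycle ω (SchrodingerCocycle fun _ => exp κ + exp (-κ)) m x 1 0 ≤
      exp (-κ) * cocycle ω (SchrodingerCocycle fun _ => exp κ + exp (-κ)) m x 0 0 := by
    intro m
    induction m with
    | zero => simp only [cocycle_zero]; simp [exp_nonneg]
    | succ m ih =>
      rw [coc_row0, coc_row1]
      obtain ⟨i1, i2⟩ := ih
      set w := cocycle ω (SchrodingerCocycle fun _ => exp κ + exp (-κ)) m x 0 0
      have h1 : exp κ * w ≤ (exp κ + exp (-κ)) * w - cocycle ω (SchrodingerCocycle fun _ => exp κ + exp (-κ)) m x 1 0 := by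
        linarith
      refine ⟨le_trans ?_ h1, ?_⟩
      · push_cast
        rw [mul_add, mul_one, exp_add, mul_comm]
        gcongr
      · have := mul_le_mul_of_nonneg_left h1 (exp_nonneg (-κ))
        rwa [← mul_assoc, ← exp_add, neg_add_cancel, exp_zero, one_mul] at this
  exact (key m).1

end coc


/-- Distance to the nearest integer. -/
noncomputable def nrm (x : ℝ) : ℝ := |x - round x|

lemma nrm_nonneg (x : ℝ) : 0 ≤ nrm x := abs_nonneg _
lemma nrm_le (x : ℝ) (z : ℤ) : nrm x ≤ |x - z| := round_le x z
lemma nrm_le_half (x : ℝ) : nrm x ≤ 1 / 2 := abs_sub_round x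

lemma nrm_sub_le (x y : ℝ) : nrm (x - y) ≤ nrm x + nrm y := by
  refine (nrm_le (x - y) (round x - round y)).trans ?_
  unfold nrm
  push_cast
  have : x - y - (round x - round y) = (x - round x) - (y - round y) := by ring
  rw [this]
  exact abs_sub _ _

lemma gcf_int (ω : ℝ) (hω : Irrational ω) (n : ℕ) :
    (∃ a b : ℤ, (GenContFract.of ω).nums n = a ∧ (GenContFract.of ω).dens n = b) := by
  have hterm : ∀ n, ¬ (GenContFract.of ω).TerminatedAt n := by
    intro n h
    have := (GenContFract.terminates_iff_rat ω).1 ⟨n, h⟩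
    obtain ⟨q, hq⟩ := this
    exact hω ⟨q, hq.symm⟩
  have key : ∀ n, ∃ a b a' b' : ℤ, (GenContFract.of ω).contsAux n = ⟨(a:ℝ), (b:ℝ)⟩ ∧
      (GenContFract.of ω).contsAux (n + 1) = ⟨(a':ℝ), (b':ℝ)⟩ := by
    intro n
    induction n with
    | zero =>
      refine ⟨1, 0, ⌊ω⌋, 1, ?_, ?_⟩
      · simp [GenContFract.zeroth_contAux_eq_one_zero]
      · simp [GenContFract.first_contAux_eq_h_one, GenContFract.of_h_eq_floor]
    | succ n ih =>
      obtain ⟨a, b, a', b', h1, h2⟩ := ih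
      obtain ⟨gp, hgp⟩ : ∃ gp, (GenContFract.of ω).s.get? n = some gp :=
        Option.ne_none_iff_exists'.1 (hterm n)
      obtain ⟨e1, z, e2⟩ := GenContFract.of_partNum_eq_one_and_exists_int_partDen_eq hgp
      refine ⟨a', b', z * a' + a, z * b' + b, h2, ?_⟩
      rw [GenContFract.contsAux_recurrence hgp h1 h2, e1, e2]
      simp
  obtain ⟨a, b, a', b', -, h⟩ := key n
  refine ⟨a', b', ?_, ?_⟩
  · rw [GenContFract.num_eq_conts_a, GenContFract.nth_cont_eq_succ_nth_contAux, h]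
  · rw [GenContFract.den_eq_conts_b, GenContFract.nth_cont_eq_succ_nth_contAux, h]

lemma dioph (ω : ℝ) (hω : Irrational ω) (M : ℝ) (hM : 1 ≤ M)
    (hbt : ∀ k : ℕ, cfDen ω (k + 1) ≤ M * cfDen ω k) :
    ∃ γ : ℝ, 0 < γ ∧ γ ≤ 1 ∧ ∀ k : ℤ, k ≠ 0 → γ / |(k:ℝ)| ≤ nrm (k * ω) := by
  have hterm : ∀ n, ¬ (GenContFract.of ω).TerminatedAt n := by
    intro n h
    have := (GenContFract.terminates_iff_rat ω).1 ⟨n, h⟩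
    obtain ⟨q, hq⟩ := this
    exact hω ⟨q, hq.symm⟩
  refine ⟨1 / (4 * M), by positivity, ?_, ?_⟩
  · rw [div_le_one (by positivity)]; linarith
  have main : ∀ k : ℕ, 0 < k → ∀ p : ℤ, 1 / (4 * M) / k ≤ |k * ω - p| := by
    intro k hk p
    have hk' : (1:ℝ) ≤ k := by exact_mod_cast hk
    set B := fun n => (GenContFract.of ω).dens n with hB
    have hfib : ∀ n, (Nat.fib (n + 1) : ℝ) ≤ B n := fun n =>
      GenContFract.succ_nth_fib_le_of_nth_den (Or.inr (hterm _))
    have hB1 : ∀ n, 1 ≤ B n := fun n => by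
      refine le_trans ?_ (hfib n)
      exact_mod_cast Nat.fib_pos.2 (Nat.succ_pos n)
    have hex : ∃ m, 2 * (k:ℝ) ≤ B (m + 1) := by
      refine ⟨2 * k + 5, le_trans ?_ (hfib _)⟩
      have := Nat.le_fib_self (n := 2 * k + 5 + 1 + 1) (by omega)
      have h2 : 2 * k ≤ Nat.fib (2 * k + 5 + 1 + 1) := by omega
      exact_mod_cast h2
    classical
    set m := Nat.find hex with hm
    have hm1 : 2 * (k:ℝ) ≤ B (m + 1) := Nat.find_spec hex
    have hm0 : B m ≤ 2 * k := by
      rcases Nat.eq_zero_or_pos m with h | h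
      · rw [h]
        have : B 0 = 1 := by simp [hB]
        rw [this]; linarith
      · have := Nat.find_min hex (m := m - 1) (by omega)
        rw [Nat.sub_add_cancel h] at this
        linarith
    have hm2 : B (m + 1) ≤ 2 * M * k := by
      have := hbt m
      unfold cfDen at this
      have h2 : M * B m ≤ M * (2 * k) := by gcongr
      calc B (m + 1) ≤ M * B m := this
        _ ≤ _ := by linarith
    have hm3 : 2 * (k:ℝ) ≤ B (m + 2) := hm1.trans GenContFract.of_den_mono
    have hone : ∀ j, 2 * (k:ℝ) ≤ B (j + 1) → B j ≤ 2 * M * k →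
        (p : ℝ) * B j ≠ k * (GenContFract.of ω).nums j → 1 / (4 * M) / k ≤ |k * ω - p| := by
      intro j h1 h2 hne
      obtain ⟨a, b, ha, hb⟩ := gcf_int ω hω j
      have hbB : B j = b := hb
      have hbp : (0:ℝ) < b := by rw [← hbB]; linarith [hB1 j]
      have happ := GenContFract.abs_sub_convs_le (hterm j)
      rw [GenContFract.conv_eq_num_div_den, ha, hb] at happ
      change _ ≤ 1 / ((b:ℝ) * B (j + 1)) at happ
      rw [ha, hbB] at hne
      have hne' : (1:ℝ) ≤ |(p:ℝ) * b - k * a| := by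
        have : p * b - k * a ≠ 0 := by
          intro h0; apply hne
          have h' : ((p * b - k * a : ℤ) : ℝ) = 0 := by rw [h0]; simp
          push_cast at h'; linarith
        have := Int.one_le_abs this
        have h3 : ((1:ℤ):ℝ) ≤ ((|p * b - k * a| : ℤ) : ℝ) := by exact_mod_cast this
        push_cast at h3; simpa using h3
      -- |b (kω - p)| ≥ 1 - k |bω - a|
      have hba : |b * ω - a| ≤ 1 / B (j + 1) := by
        have e : b * ω - a = b * (ω - a / b) := by field_simp
        rw [e, abs_mul, abs_of_pos hbp]
        calc (b:ℝ) * |ω - a / b| ≤ b * (1 / (b * B (j + 1))) := by gcongr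
          _ = _ := by have := hB1 (j+1); field_simp
      have h5 : k * |b * ω - a| ≤ 1 / 2 := by
        calc (k:ℝ) * |b * ω - a| ≤ k * (1 / B (j + 1)) := by gcongr
          _ ≤ k * (1 / (2 * k)) := by gcongr
          _ = 1 / 2 := by field_simp
      have h6 : (1:ℝ) / 2 ≤ b * |k * ω - p| := by
        have e : (p:ℝ) * b - k * a = -(b * (k * ω - p)) + k * (b * ω - a) := by ring
        rw [e] at hne'
        have := hne'.trans (abs_add_le _ _)
        rw [abs_neg, abs_mul, abs_mul, abs_of_pos hbp, abs_of_pos (by linarith : (0:ℝ) < k)] at this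
        linarith
      rw [div_div, div_le_iff₀ (by positivity)]
      have h7 : (b:ℝ) * |k * ω - p| ≤ 2 * M * k * |k * ω - p| := by
        rw [← hbB]; gcongr
      linarith
    by_cases hc : (p : ℝ) * B m = k * (GenContFract.of ω).nums m
    · apply hone (m + 1) hm3 hm2
      intro hc2
      have hdet := SimpContFract.determinant (s := SimpContFract.of ω) (n := m) (hterm m)
      change (GenContFract.of ω).nums m * B (m + 1) - B m * (GenContFract.of ω).nums (m + 1) = _ at hdet
      have : (k:ℝ) * ((GenContFract.of ω).nums m * B (m + 1) - B m * (GenContFract.of ω).nums (m + 1)) = 0 := by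
        linear_combination (-B (m+1)) * hc + B m * hc2
      rw [hdet] at this
      have h1 : (k:ℝ) ≠ 0 := by positivity
      have h2 : ((-1:ℝ)) ^ (m + 1) ≠ 0 := pow_ne_zero _ (by norm_num)
      exact (mul_ne_zero h1 h2) this
    · apply hone m hm1 _ hc
      have : (0:ℝ) ≤ (M - 1) * k := mul_nonneg (by linarith) (by linarith)
      linarith
  intro k hk
  unfold nrm
  rcases lt_or_gt_of_ne hk with h | h
  · have := main k.natAbs (by omega) (-round (k * ω))
    have e : (k.natAbs : ℝ) = -(k:ℝ) := by
      rw [Nat.cast_natAbs, abs_of_neg h]; push_cast; rfl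
    rw [e] at this
    rw [abs_of_neg (by exact_mod_cast h : (k:ℝ) < 0)]
    refine this.trans (le_of_eq ?_)
    rw [← abs_neg]; congr 1; push_cast; ring
  · have := main k.natAbs (by omega) (round (k * ω))
    have e : (k.natAbs : ℝ) = (k:ℝ) := by
      rw [Nat.cast_natAbs, abs_of_pos h]
    rw [e] at this
    rwa [abs_of_pos (by exact_mod_cast h : (0:ℝ) < (k:ℝ))]

lemma density {ω γ : ℝ} (hγ : 0 < γ) (hd : ∀ k : ℤ, k ≠ 0 → γ / |(k:ℝ)| ≤ nrm (k * ω))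
    {ρ : ℝ} (h0 : 0 < ρ) (h1 : ρ ≤ 1) (x : ℝ) :
    ∃ k : ℤ, |(k:ℝ)| ≤ 4 * (1 / γ + 1) / ρ ^ 2 ∧ nrm (x + k * ω) ≤ ρ := by
  set Q := ⌈1 / ρ⌉₊ with hQ
  have hQ1 : 1 / ρ ≤ Q := Nat.le_ceil _
  have h1ρ : 1 ≤ 1 / ρ := by rw [le_div_iff₀ h0]; linarith
  have hQ2 : (Q:ℝ) ≤ 2 / ρ := by
    have := Nat.ceil_lt_add_one (a := 1 / ρ) (by positivity)
    have e : 2 / ρ = 1 / ρ + 1 / ρ := by ring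
    rw [e]; linarith
  have hQpos : 0 < Q := by
    have : (0:ℝ) < Q := by linarith
    exact_mod_cast this
  obtain ⟨q, hq0, hqQ, hq⟩ := Real.exists_nat_abs_mul_sub_round_le ω hQpos
  have hq1 : (1:ℝ) ≤ q := by exact_mod_cast hq0
  have hqQ' : (q:ℝ) ≤ Q := by exact_mod_cast hqQ
  set t := (q:ℝ) * ω - round (q * ω) with ht
  have hts : γ / q ≤ |t| := by
    have := hd q (by exact_mod_cast hq0.ne')
    simpa [nrm, abs_of_nonneg (by positivity : (0:ℝ) ≤ q)] using this
  have htρ : |t| ≤ ρ := by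
    refine hq.trans ?_
    rw [div_le_iff₀ (by positivity)]
    rw [div_le_iff₀ h0] at hQ1
    nlinarith
  have htpos : 0 < |t| := lt_of_lt_of_le (by positivity) hts
  have htne : t ≠ 0 := abs_pos.1 htpos
  set y := Int.fract x with hy
  have hy0 : 0 ≤ y := Int.fract_nonneg x
  have hy1 : y < 1 := Int.fract_lt_one x
  set j := round (-y / t) with hj
  have hjr : |-y / t - j| ≤ 1 / 2 := abs_sub_round _
  have hyt : |y + j * t| ≤ ρ := by
    have e : y + j * t = -((-y / t - j) * t) := by field_simp; ring
    rw [e, abs_neg, abs_mul]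
    nlinarith
  have hjb : |(j:ℝ)| ≤ Q / γ + 1 := by
    have e : (j:ℝ) = -y / t - (-y / t - j) := by ring
    rw [e]
    refine (abs_sub _ _).trans ?_
    have : |-y / t| ≤ Q / γ := by
      rw [abs_div, abs_neg, abs_of_nonneg hy0, div_le_div_iff₀ htpos hγ]
      rw [div_le_iff₀ (by positivity)] at hts
      nlinarith
    linarith
  refine ⟨j * q, ?_, ?_⟩
  · push_cast
    rw [abs_mul, abs_of_nonneg (by positivity : (0:ℝ) ≤ q)]
    calc |(j:ℝ)| * q ≤ (Q / γ + 1) * Q := by gcongr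
      _ ≤ (Q / γ + Q) * Q := by gcongr; linarith
      _ = (1 / γ + 1) * (Q * Q) := by ring
      _ ≤ (1 / γ + 1) * ((2 / ρ) * (2 / ρ)) := by gcongr
      _ = _ := by field_simp; ring
  · have e : x + ((j * q : ℤ) : ℝ) * ω - ((⌊x⌋ + j * round (q * ω) : ℤ) : ℝ) = y + j * t := by
      rw [ht, hy, Int.fract]; push_cast; ring
    exact (nrm_le _ (⌊x⌋ + j * round (q * ω))).trans (by rw [e]; exact hyt)


lemma geom_int {t : ℝ} (h0 : 0 < t) (h1 : t ≤ 1) :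
    Summable (fun k : ℤ => exp (-(t * |(k:ℝ)|))) ∧ ∑' k : ℤ, exp (-(t * |(k:ℝ)|)) ≤ 4 / t := by
  set r := exp (-t) with hr
  have hr0 : 0 < r := exp_pos _
  have hr1 : r ≤ 1 / (1 + t) := by
    rw [hr, exp_neg, ← one_div]
    apply one_div_le_one_div_of_le (by positivity)
    have := add_one_le_exp t; linarith
  have hr2 : t / 2 ≤ 1 - r := by
    have : 1 - 1 / (1 + t) = t / (1 + t) := by field_simp; ring
    have h3 : t / 2 ≤ t / (1 + t) := by gcongr; linarith
    linarith
  have hr3 : r < 1 := by linarith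
  have hpow : ∀ n : ℕ, exp (-(t * n)) = r ^ n := fun n => by
    rw [hr, ← exp_nat_mul]; congr 1; ring
  have s1 : HasSum (fun n : ℕ => exp (-(t * |((n:ℤ):ℝ)|))) (1 - r)⁻¹ := by
    have := hasSum_geometric_of_lt_one hr0.le hr3
    have e : (fun n : ℕ => exp (-(t * |((n:ℤ):ℝ)|))) = fun n => r ^ n := by
      funext n
      rw [← hpow]; simp
    rw [e]; exact this
  have s2 : HasSum (fun n : ℕ => exp (-(t * |((-((n:ℤ) + 1) : ℤ):ℝ)|))) ((1 - r)⁻¹ * r) := by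
    have := (hasSum_geometric_of_lt_one hr0.le hr3).mul_right r
    have e : (fun n : ℕ => exp (-(t * |((-((n:ℤ) + 1) : ℤ):ℝ)|))) = fun n => r ^ n * r := by
      funext n
      rw [← pow_succ, ← hpow]
      push_cast
      rw [abs_neg, abs_of_nonneg (by positivity)]
    rw [e]; exact this
  have s := HasSum.of_nat_of_neg_add_one (f := fun k : ℤ => exp (-(t * |(k:ℝ)|))) s1 s2
  refine ⟨s.summable, ?_⟩
  rw [s.tsum_eq]
  have : (1 - r)⁻¹ ≤ 2 / t := by
    rw [inv_le_comm₀ (by linarith) (by positivity), inv_div]; exact hr2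
  have h5 : (1 - r)⁻¹ * r ≤ 2 / t * 1 := by
    apply mul_le_mul this hr3.le hr0.le (by positivity)
  calc _ ≤ 2 / t + 2 / t * 1 := by linarith
    _ = 4 / t := by ring

/-- A Schrödinger operator along the orbits together with its Green kernel. -/
structure Gr (ω κ₀ : ℝ) (l : ℕ) (W : ℝ → ℝ) (G : ℤ → ℝ → ℝ) (B c Λ : ℝ) : Prop where
  Wc : ContDiff ℝ l W
  Wp : Function.Periodic W 1
  Gp : ∀ k, Function.Periodic (G k) 1
  eq : ∀ k x, W x * G k x - G (k - 1) (x + ω) - G (k + 1) (x - ω) = if k = 0 then 1 else 0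
  up : ∀ (k : ℤ) (x : ℝ), G k x ≤ B * exp (-(c * |(k:ℝ)|))
  lo : ∀ (k : ℤ) (x : ℝ), exp (-(κ₀ * (|(k:ℝ)| + 1))) ≤ G k x
  pb : ∀ k : ℤ, PB l (Λ * (|(k:ℝ)| + 1)) (G k)

namespace Gr
variable {ω κ₀ : ℝ} {l : ℕ} {W : ℝ → ℝ} {G : ℤ → ℝ → ℝ} {B c Λ : ℝ}

lemma pos (h : Gr ω κ₀ l W G B c Λ) (k : ℤ) (x : ℝ) : 0 < G k x :=
  (exp_pos _).trans_le (h.lo k x)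

lemma Bpos (h : Gr ω κ₀ l W G B c Λ) : 0 < B := by
  have := (h.pos 0 0).trans_le (h.up 0 0)
  simpa using this

lemma summable (h : Gr ω κ₀ l W G B c Λ) (hc : 0 < c) (hc1 : c ≤ 1) (x : ℝ) {g : ℤ → ℝ} {C : ℝ}
    (hg : ∀ k, |g k| ≤ C) : Summable (fun k => G k x * g k) := by
  refine Summable.of_norm_bounded (((geom_int hc hc1).1.mul_left B).mul_right C) fun k => ?_
  rw [norm_mul, norm_eq_abs, norm_eq_abs, abs_of_pos (h.pos k x)]
  exact mul_le_mul (h.up k x) (hg k) (abs_nonneg _) (mul_nonneg h.Bpos.le (exp_pos _).le)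

lemma gsum (h : Gr ω κ₀ l W G B c Λ) (hc : 0 < c) (hc1 : c ≤ 1) (x : ℝ) {g : ℤ → ℝ} {C : ℝ}
    (hg : ∀ k, |g k| ≤ C) :
    W x * (∑' k, G k x * g k) - (∑' k, G k (x + ω) * g (k + 1)) -
      (∑' k, G k (x - ω) * g (k - 1)) = g 0 := by
  have e1 : ∑' k, G k (x + ω) * g (k + 1) = ∑' k, G (k - 1) (x + ω) * g k := by
    rw [← (Equiv.subRight (1:ℤ)).tsum_eq]
    simp
  have e2 : ∑' k, G k (x - ω) * g (k - 1) = ∑' k, G (k + 1) (x - ω) * g k := by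
    rw [← (Equiv.addRight (1:ℤ)).tsum_eq]
    simp
  have s0 := h.summable hc hc1 x hg
  have s1 : Summable (fun k => G (k - 1) (x + ω) * g k) := by
    have := h.summable hc hc1 (x + ω) (g := fun k => g (k + 1)) (fun k => hg (k + 1))
    rw [← (Equiv.subRight (1:ℤ)).summable_iff] at this
    refine this.congr fun k => ?_
    simp
  have s2 : Summable (fun k => G (k + 1) (x - ω) * g k) := by
    have := h.summable hc hc1 (x - ω) (g := fun k => g (k - 1)) (fun k => hg (k - 1))
    rw [← (Equiv.addRight (1:ℤ)).summable_iff] at this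
    refine this.congr fun k => ?_
    simp
  rw [e1, e2, ← tsum_mul_left, ← Summable.tsum_sub (s0.mul_left _) s1,
    ← Summable.tsum_sub ((s0.mul_left _).sub s1) s2]
  have : ∀ k, W x * (G k x * g k) - G (k - 1) (x + ω) * g k - G (k + 1) (x - ω) * g k =
      if k = 0 then g 0 else 0 := by
    intro k
    have := h.eq k x
    split_ifs at this ⊢ with hk
    · subst hk; linear_combination g 0 * this
    · linear_combination g k * this
  simp_rw [this]
  simp

end Gr

/-- weights of paths -/
noncomputable def plen : List ℤ → ℤ → ℝ
  | [], k => |(k:ℝ)| + 1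
  | j :: p, k => |(j:ℝ)| + plen p (k - j)

lemma plen_ge (p : List ℤ) (k : ℤ) : |(k:ℝ)| + 1 ≤ plen p k := by
  induction p generalizing k with
  | nil => exact le_rfl
  | cons j p ih =>
    have h1 := ih (k - j)
    have h2 : |(k:ℝ)| ≤ |(j:ℝ)| + |((k - j : ℤ):ℝ)| := by
      have := abs_add_le (j:ℝ) ((k - j : ℤ):ℝ)
      have e : (j:ℝ) + ((k - j : ℤ):ℝ) = k := by push_cast; ring
      rwa [e] at this
    simp only [plen]; linarith

/-- contribution of a path -/
noncomputable def pth (ω : ℝ) (E : ℝ → ℝ) (G : ℤ → ℝ → ℝ) (t : ℝ → ℝ) : List ℤ → ℤ → ℝ → ℝ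
  | [], k, x => E x * G k x
  | j :: p, k, x => (if j = 0 then 0 else E x * G j x * t (x + j * ω)) *
      pth ω E G t p (k - j) (x + j * ω)

section stepB
variable {ω κ₀ : ℝ} {l : ℕ} {W : ℝ → ℝ} {G : ℤ → ℝ → ℝ} {B c Λ : ℝ}
  {τ E : ℝ → ℝ} {a η Λ₂ τb s K₂ : ℝ}

lemma tsum_list {f : List ℤ → ℝ} (hf : Summable f) (hn : ∀ p, 0 ≤ f p) :
    ∑' p, f p = f [] + ∑' j : ℤ, ∑' p, f (j :: p) := by
  let e : Option (ℤ × List ℤ) ≃ List ℤ :=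
    { toFun := fun o => match o with
        | none => []
        | some z => z.1 :: z.2
      invFun := fun p => match p with
        | [] => none
        | j :: p => some (j, p)
      left_inv := fun o => by cases o <;> rfl
      right_inv := fun p => by cases p <;> rfl }
  have hs : Summable (fun o => f (e o)) := e.summable_iff.2 hf
  have hs2 : Summable (fun z : ℤ × List ℤ => f (z.1 :: z.2)) :=
    hs.comp_injective (Option.some_injective _)
  have h1 : HasSum (fun o => f (e o)) (f [] + ∑' z : ℤ × List ℤ, f (z.1 :: z.2)) := by
    have hh := hs.hasSum
    rw [hs.tsum_eq_add_tsum_ite none] at hh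
    convert hh using 2
    · rfl
    have hz : Function.support (fun o : Option (ℤ × List ℤ) => if o = none then 0 else f (e o)) ⊆
        Set.range some := by
      intro o ho
      cases o with
      | none => simp at ho
      | some z => exact ⟨z, rfl⟩
    have := (Option.some_injective (ℤ × List ℤ)).tsum_eq hz
    rw [← this]
    refine tsum_congr fun z => ?_
    simp [e]
  rw [← e.tsum_eq, h1.tsum_eq]
  congr 1
  exact hs2.tsum_prod

set_option maxHeartbeats 4000000 in
lemma stepB (h : Gr ω κ₀ l W G B c Λ) (hc : 0 < c) (hc1 : c ≤ 1) (hΛ : 0 ≤ Λ) (hΛ₂ : 0 ≤ Λ₂)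
    (hκ₀ : 0 ≤ κ₀)
    (hτp : Function.Periodic τ 1) (hτ : PB l Λ₂ τ) (hτpos : ∀ x, 0 < τ x)
    (hEp : Function.Periodic E 1) (hE : PB l Λ₂ E) (ha0 : 0 ≤ a) (ha1 : a ≤ 1) (hη : 0 < η)
    (hE1 : ∀ x, E x * (1 - a * τ x * G 0 x) = 1) (hE2 : ∀ x, 1 ≤ E x) (hE3 : ∀ x, E x ≤ 1 / η)
    (hτb : ∀ x, τ x ≤ τb) (hs : 0 < s) (hsτ : s ≤ τb)
    (hcr : ∀ x (j : ℤ), j ≠ 0 → √ (τ x) * √ (τ (x + j * ω)) ≤ s * exp (c / 4 * |(j:ℝ)|))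
    (hηB : η ≤ B) (hy : B * s / η * (16 / c) ≤ 1 / 2)
    (hK₂ : 1 ≤ K₂)
    (hK₂l : l ≤ c / 2 * K₂)
    (hK₂b : κ₀ + log (2 * (exp (c / 2) * (B / η) * (τb / s))) ≤ c / 2 * K₂) :
    ∃ G' : ℤ → ℝ → ℝ, Gr ω κ₀ l (fun x => W x - a * τ x) G'
      (2 * (exp (c / 2) * (B / η) * (τb / s))) (c / 2) (2 * (2 * Λ + 2 * Λ₂) * K₂) ∧
      ∀ x, E x * G 0 x ≤ G' 0 x := by
  have hB := h.Bpos
  have hτb0 : 0 < τb := hs.trans_le hsτ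
  set Z := exp (c / 2) * (B / η) * (τb / s) with hZ
  have hZ0 : 0 < Z := by positivity
  set t : ℝ → ℝ := fun x => a * τ x with ht
  have ht0 : ∀ x, 0 ≤ t x := fun x => mul_nonneg ha0 (hτpos x).le
  have hEpos : ∀ x, 0 < E x := fun x => by linarith [hE2 x]
  set y : ℤ → ℝ := fun j => B * s / η * exp (-(c / 4 * |(j:ℝ)|)) with hyd
  have hy0 : ∀ j, 0 ≤ y j := fun j => by positivity
  obtain ⟨gs, gb⟩ := geom_int (t := c / 4) (by positivity) (by linarith)
  have hys : Summable y := gs.mul_left _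
  have hyt : ∑' j, y j ≤ 1 / 2 := by
    simp only [hyd]
    rw [tsum_mul_left]
    refine le_trans ?_ hy
    gcongr
    refine gb.trans (le_of_eq ?_)
    field_simp; norm_num
  obtain ⟨ls, lt2⟩ := lprod_summable hy0 hys hyt
  set T := pth ω E G t with hT
  have hT0 : ∀ p k x, 0 ≤ T p k x := by
    intro p
    induction p with
    | nil => intro k x; exact mul_nonneg (hEpos x).le (h.pos k x).le
    | cons j p ih =>
      intro k x
      refine mul_nonneg ?_ (ih _ _)
      split_ifs
      · exact le_rfl
      · exact mul_nonneg (mul_nonneg (hEpos x).le (h.pos j x).le) (ht0 _)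
  have hTper : ∀ p k, Function.Periodic (T p k) 1 := by
    intro p
    induction p with
    | nil => intro k x; simp only [hT, pth]; rw [hEp x, h.Gp k x]
    | cons j p ih =>
      intro k x
      have e : x + 1 + j * ω = x + j * ω + 1 := by ring
      have := ih (k - j) (x + j * ω)
      simp only [hT] at this
      simp only [hT, pth, ht]
      rw [hEp x, h.Gp j x, e, hτp, this]
  have hTpb : ∀ p k, PB l ((2 * Λ + 2 * Λ₂) * plen p k) (T p k) := by
    intro p
    induction p with
    | nil =>
      intro k
      have hk := abs_nonneg (k:ℝ)
      refine (hE.mul (h.pb k) hΛ₂ (by positivity)).mono (by positivity) ?_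
      simp only [plen]
      nlinarith
    | cons j p ih =>
      intro k
      have hpl : 0 ≤ plen p (k - j) := by
        have := plen_ge p (k - j); have := abs_nonneg ((k - j : ℤ):ℝ); linarith
      by_cases hj : j = 0
      · have : T (j :: p) k = fun _ => 0 := by
          funext x; simp [hT, pth, hj]
        rw [this]
        exact PB.const le_rfl (mul_nonneg (by positivity) (by simp only [plen]; positivity))
      · have hj1 : (1:ℝ) ≤ |(j:ℝ)| := by exact_mod_cast Int.one_le_abs hj
        have e : T (j :: p) k = fun x => (E x * G j x * (a * τ (x + j * ω))) * T p (k - j) (x + j * ω) := by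
          funext x; simp [hT, pth, hj, ht]
        rw [e]
        refine (((hE.mul (h.pb j) hΛ₂ (by positivity)).mul ((hτ.shift _).cmul hΛ₂ ha0) (by positivity)
          hΛ₂).mul ((ih (k - j)).shift _) (by positivity) (by positivity)).mono (by positivity) ?_
        simp only [plen]
        nlinarith
  have hσ : ∀ x, 0 < √ (τ x) := fun x => sqrt_pos.2 (hτpos x)
  have hσ2 : ∀ x, √ (τ x) * √ (τ x) = τ x := fun x => mul_self_sqrt (hτpos x).le
  have hσb : ∀ x, √ (τ x) ≤ √ τb := fun x => sqrt_le_sqrt (hτb x)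
  have hσb2 : √ τb * √ τb = τb := mul_self_sqrt hτb0.le
  have hσb0 : 0 < √ τb := sqrt_pos.2 hτb0
  set Q := √ τb * exp (c / 2) * (B / η) with hQ
  have hQ0 : 0 < Q := by positivity
  have hEG : ∀ (j : ℤ) (x : ℝ), E x * G j x ≤ B / η * exp (-(c * |(j:ℝ)|)) := fun j x => by
    have := mul_le_mul (hE3 x) (h.up j x) (h.pos j x).le (by positivity)
    refine this.trans (le_of_eq (by ring))
  have hnil : ∀ (k : ℤ) (x : ℝ), exp (c / 2 * (|(k:ℝ)| + 1)) * (E x * G k x) ≤ exp (c / 2) * (B / η) := by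
    intro k x
    have hk := abs_nonneg (k:ℝ)
    calc exp (c / 2 * (|(k:ℝ)| + 1)) * (E x * G k x)
        ≤ exp (c / 2 * (|(k:ℝ)| + 1)) * (B / η * exp (-(c * |(k:ℝ)|))) := by
          exact mul_le_mul_of_nonneg_left (hEG k x) (exp_pos _).le
      _ = exp (c / 2 - c / 2 * |(k:ℝ)|) * (B / η) := by
          have : exp (c / 2 * (|(k:ℝ)| + 1)) * exp (-(c * |(k:ℝ)|)) = exp (c / 2 - c / 2 * |(k:ℝ)|) := by
            rw [← exp_add]; congr 1; ring
          rw [← this]; ring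
      _ ≤ _ := by
          gcongr
          have : 0 ≤ c / 2 * |(k:ℝ)| := by positivity
          linarith
  have hT1 : ∀ p k x, √ (τ x) * (exp (c / 2 * plen p k) * T p k x) ≤ Q * lprod y p := by
    intro p
    induction p with
    | nil =>
      intro k x
      rw [lprod_nil, mul_one, hQ, mul_assoc]
      refine mul_le_mul (hσb x) (hnil k x) ?_ hσb0.le
      exact mul_nonneg (exp_pos _).le (mul_nonneg (hEpos x).le (h.pos k x).le)
    | cons j p ih =>
      intro k x
      by_cases hj : j = 0
      · have : T (j :: p) k x = 0 := by simp [hT, pth, hj]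
        rw [this]
        have := lprod_nonneg hy0 (j :: p)
        simp only [mul_zero]; positivity
      · have e : T (j :: p) k x = (E x * G j x * (a * (√ (τ (x + j * ω)) * √ (τ (x + j * ω))))) *
            T p (k - j) (x + j * ω) := by
          rw [hσ2]; simp [hT, pth, hj, ht]
        have e2 : √ (τ x) * (exp (c / 2 * plen (j :: p) k) * T (j :: p) k x) =
            (a * (exp (c / 2 * |(j:ℝ)|) * ((E x * G j x) * (√ (τ x) * √ (τ (x + j * ω)))))) *
            (√ (τ (x + j * ω)) * (exp (c / 2 * plen p (k - j)) * T p (k - j) (x + j * ω))) := by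
          rw [e]; simp only [plen]; rw [mul_add, exp_add]; ring
        rw [e2, lprod_cons]
        have h1 := ih (k - j) (x + j * ω)
        have h2 : exp (c / 2 * |(j:ℝ)|) * ((E x * G j x) * (√ (τ x) * √ (τ (x + j * ω)))) ≤ y j := by
          calc exp (c / 2 * |(j:ℝ)|) * ((E x * G j x) * (√ (τ x) * √ (τ (x + j * ω))))
              ≤ exp (c / 2 * |(j:ℝ)|) * ((B / η * exp (-(c * |(j:ℝ)|))) * (s * exp (c / 4 * |(j:ℝ)|))) := by
                have := hcr x j hj
                have := hEG j x
                gcongr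
            _ = B * s / η * (exp (c / 2 * |(j:ℝ)|) * exp (-(c * |(j:ℝ)|)) * exp (c / 4 * |(j:ℝ)|)) := by
                ring
            _ = y j := by
                rw [hyd, ← exp_add, ← exp_add]; congr 2; ring
        have h3 : 0 ≤ exp (c / 2 * |(j:ℝ)|) * ((E x * G j x) * (√ (τ x) * √ (τ (x + j * ω)))) :=
          mul_nonneg (exp_pos _).le (mul_nonneg (mul_nonneg (hEpos x).le (h.pos j x).le)
            (mul_nonneg (hσ _).le (hσ _).le))
        have h4 : a * (exp (c / 2 * |(j:ℝ)|) * ((E x * G j x) * (√ (τ x) * √ (τ (x + j * ω))))) ≤ y j := by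
          nlinarith
        have h5 : 0 ≤ √ (τ (x + j * ω)) * (exp (c / 2 * plen p (k - j)) * T p (k - j) (x + j * ω)) :=
          mul_nonneg (hσ _).le (mul_nonneg (exp_pos _).le (hT0 _ _ _))
        refine (mul_le_mul h4 h1 h5 (hy0 j)).trans (le_of_eq (by ring))
  have hT2 : ∀ p k x, exp (c / 2 * plen p k) * T p k x ≤ Z * lprod y p := by
    intro p k x
    cases p with
    | nil =>
      rw [lprod_nil, mul_one, hZ]
      refine (hnil k x).trans ?_
      have : 1 ≤ τb / s := by rw [le_div_iff₀ hs]; linarith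
      exact le_mul_of_one_le_right (by positivity) this
    | cons j p =>
      by_cases hj : j = 0
      · have : T (j :: p) k x = 0 := by simp [hT, pth, hj]
        rw [this]
        have := lprod_nonneg hy0 (j :: p)
        simp only [mul_zero]; positivity
      · have e : T (j :: p) k x = (E x * G j x * (a * (√ (τ (x + j * ω)) * √ (τ (x + j * ω))))) *
            T p (k - j) (x + j * ω) := by
          rw [hσ2]; simp [hT, pth, hj, ht]
        have e2 : (exp (c / 2 * plen (j :: p) k) * T (j :: p) k x) =
            (a * (exp (c / 2 * |(j:ℝ)|) * ((E x * G j x) * √ (τ (x + j * ω))))) *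
            (√ (τ (x + j * ω)) * (exp (c / 2 * plen p (k - j)) * T p (k - j) (x + j * ω))) := by
          rw [e]; simp only [plen]; rw [mul_add, exp_add]; ring
        rw [e2, lprod_cons]
        have h1 := hT1 p (k - j) (x + j * ω)
        have hj0 := abs_nonneg (j:ℝ)
        have h2 : exp (c / 2 * |(j:ℝ)|) * ((E x * G j x) * √ (τ (x + j * ω))) ≤ √ τb / s * y j := by
          calc exp (c / 2 * |(j:ℝ)|) * ((E x * G j x) * √ (τ (x + j * ω)))
              ≤ exp (c / 2 * |(j:ℝ)|) * ((B / η * exp (-(c * |(j:ℝ)|))) * √ τb) := by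
                have := hσb (x + j * ω)
                have := hEG j x
                gcongr
            _ = √ τb * (B / η) * (exp (c / 2 * |(j:ℝ)|) * exp (-(c * |(j:ℝ)|))) := by
                ring
            _ ≤ √ τb * (B / η) * exp (-(c / 4 * |(j:ℝ)|)) := by
                rw [← exp_add]
                gcongr
                nlinarith
            _ = √ τb / s * y j := by rw [hyd]; field_simp
        have h3 : 0 ≤ exp (c / 2 * |(j:ℝ)|) * ((E x * G j x) * √ (τ (x + j * ω))) :=
          mul_nonneg (exp_pos _).le (mul_nonneg (mul_nonneg (hEpos x).le (h.pos j x).le)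
            (hσ _).le)
        have h4 : a * (exp (c / 2 * |(j:ℝ)|) * ((E x * G j x) * √ (τ (x + j * ω)))) ≤ √ τb / s * y j := by
          nlinarith
        have h5 : 0 ≤ √ (τ (x + j * ω)) * (exp (c / 2 * plen p (k - j)) * T p (k - j) (x + j * ω)) :=
          mul_nonneg (hσ _).le (mul_nonneg (exp_pos _).le (hT0 _ _ _))
        refine (mul_le_mul h4 h1 h5 (mul_nonneg (by positivity) (hy0 j))).trans (le_of_eq ?_)
        rw [hQ, hZ]
        have : τb = √ τb * √ τb := hσb2.symm
        calc √ τb / s * y j * (√ τb * exp (c / 2) * (B / η) * lprod y p)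
            = (√ τb * √ τb) / s * y j * (exp (c / 2) * (B / η) * lprod y p) := by ring
          _ = _ := by rw [hσb2]; ring
  have hplen0 : ∀ p k, 0 ≤ plen p k := fun p k => by
    have := plen_ge p k; have := abs_nonneg (k:ℝ); linarith
  have hTle : ∀ (p : List ℤ) (k : ℤ) (x : ℝ), T p k x ≤ Z * lprod y p * exp (-(c / 2 * |(k:ℝ)|)) := by
    intro p k x
    have h1 := hT2 p k x
    have h2 : exp (c / 2 * |(k:ℝ)|) ≤ exp (c / 2 * plen p k) := by
      apply exp_le_exp.2; have := plen_ge p k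
      gcongr; linarith
    have h3 : exp (c / 2 * |(k:ℝ)|) * T p k x ≤ Z * lprod y p :=
      (mul_le_mul_of_nonneg_right h2 (hT0 p k x)).trans h1
    rw [exp_neg, ← div_eq_mul_inv, le_div_iff₀ (exp_pos _), mul_comm]
    exact h3
  have hTs : ∀ (k : ℤ) (x : ℝ), Summable (fun p => T p k x) := fun k x =>
    Summable.of_nonneg_of_le (fun p => hT0 p k x) (fun p => hTle p k x)
      ((ls.mul_left _).mul_right _)
  set G' : ℤ → ℝ → ℝ := fun k x => ∑' p, T p k x with hG'
  have hG'0 : ∀ (k : ℤ) (x : ℝ), 0 ≤ G' k x := fun k x => tsum_nonneg fun p => hT0 p k x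
  have hG'up : ∀ (k : ℤ) (x : ℝ), G' k x ≤ 2 * Z * exp (-(c / 2 * |(k:ℝ)|)) := by
    intro k x
    calc G' k x ≤ ∑' p, Z * lprod y p * exp (-(c / 2 * |(k:ℝ)|)) :=
          (hTs k x).tsum_le_tsum (fun p => hTle p k x) ((ls.mul_left _).mul_right _)
      _ = Z * (∑' p, lprod y p) * exp (-(c / 2 * |(k:ℝ)|)) := by
          rw [tsum_mul_right, tsum_mul_left]
      _ ≤ Z * 2 * exp (-(c / 2 * |(k:ℝ)|)) := by gcongr
      _ = _ := by ring
  have hG'lo : ∀ (k : ℤ) (x : ℝ), E x * G k x ≤ G' k x := fun k x =>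
    (hTs k x).le_tsum [] fun p _ => hT0 p k x
  have hG'lo2 : ∀ (k : ℤ) (x : ℝ), G k x ≤ G' k x := fun k x =>
    (le_mul_of_one_le_left (h.pos k x).le (hE2 x)).trans (hG'lo k x)
  have hrec : ∀ (k : ℤ) (x : ℝ), G' k x = G k x + ∑' j : ℤ, G j x * (t (x + j * ω) * G' (k - j) (x + j * ω)) := by
    intro k x
    have hg : ∀ j : ℤ, |t (x + j * ω) * G' (k - j) (x + j * ω)| ≤ τb * (2 * Z) := by
      intro j
      rw [abs_of_nonneg (mul_nonneg (ht0 _) (hG'0 _ _))]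
      refine mul_le_mul ?_ ((hG'up _ _).trans ?_) (hG'0 _ _) hτb0.le
      · have := hτpos (x + j * ω); have := hτb (x + j * ω)
        simp only [ht]; nlinarith
      · have : exp (-(c / 2 * |((k - j : ℤ):ℝ)|)) ≤ 1 := by
          apply exp_le_one_iff.2; rw [neg_nonpos]; positivity
        have h2 : 0 ≤ 2 * Z := by positivity
        nlinarith
    have hsum := h.summable hc hc1 x hg
    have h1 : G' k x = T [] k x + ∑' j : ℤ, ∑' p, T (j :: p) k x :=
      tsum_list (f := fun p => T p k x) (hTs k x) (fun p => hT0 p k x)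
    have h2 : ∀ j : ℤ, ∑' p, T (j :: p) k x = E x * (if j = 0 then 0 else
        G j x * (t (x + j * ω) * G' (k - j) (x + j * ω))) := by
      intro j
      have : ∀ p, T (j :: p) k x = (if j = 0 then 0 else E x * G j x * t (x + j * ω)) *
        T p (k - j) (x + j * ω) := fun p => rfl
      simp_rw [this]
      rw [tsum_mul_left]
      change _ * G' (k - j) (x + j * ω) = _
      split_ifs <;> ring
    simp_rw [h2] at h1
    rw [tsum_mul_left] at h1
    have h3 : ∑' j : ℤ, G j x * (t (x + j * ω) * G' (k - j) (x + j * ω)) =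
        G 0 x * (t x * G' k x) + ∑' j : ℤ, (if j = 0 then 0 else
        G j x * (t (x + j * ω) * G' (k - j) (x + j * ω))) := by
      rw [hsum.tsum_eq_add_tsum_ite 0]
      simp
    rw [h3]
    set S := ∑' j : ℤ, (if j = 0 then 0 else
        G j x * (t (x + j * ω) * G' (k - j) (x + j * ω)))
    have h4 : G' k x = E x * G k x + E x * S := h1
    have h5 := hE1 x
    have h6 : (1 - a * τ x * G 0 x) * G' k x = G k x + S := by
      rw [h4]; linear_combination (G k x + S) * h5
    simp only [ht]
    linear_combination h6
  refine ⟨G', ⟨?_, ?_, ?_, ?_, hG'up, ?_, ?_⟩, hG'lo 0⟩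
  · exact h.Wc.sub (contDiff_const.mul hτ.1)
  · intro x; simp only; rw [h.Wp x, hτp x]
  · intro k x; simp only [hG']; exact tsum_congr fun p => hTper p k x
  · intro k x
    set g : ℤ → ℝ := fun j => t (x + j * ω) * G' (k - j) (x + j * ω) with hgd
    have hg : ∀ j : ℤ, |g j| ≤ τb * (2 * Z) := by
      intro j
      rw [abs_of_nonneg (mul_nonneg (ht0 _) (hG'0 _ _))]
      refine mul_le_mul ?_ ((hG'up _ _).trans ?_) (hG'0 _ _) hτb0.le
      · have := hτpos (x + j * ω); have := hτb (x + j * ω)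
        simp only [ht]; nlinarith
      · have : exp (-(c / 2 * |((k - j : ℤ):ℝ)|)) ≤ 1 := by
          apply exp_le_one_iff.2; rw [neg_nonpos]; positivity
        have h2 : 0 ≤ 2 * Z := by positivity
        nlinarith
    have hgs := h.gsum hc hc1 x hg
    have r0 := hrec k x
    have r1 := hrec (k - 1) (x + ω)
    have r2 := hrec (k + 1) (x - ω)
    have e1 : ∑' j : ℤ, G j (x + ω) * (t (x + ω + j * ω) * G' (k - 1 - j) (x + ω + j * ω)) =
        ∑' j, G j (x + ω) * g (j + 1) := by
      refine tsum_congr fun j => ?_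
      have e : x + ω + j * ω = x + ((j + 1 : ℤ) : ℝ) * ω := by push_cast; ring
      have e' : k - 1 - j = k - (j + 1) := by ring
      rw [e, e', hgd]
    have e2 : ∑' j : ℤ, G j (x - ω) * (t (x - ω + j * ω) * G' (k + 1 - j) (x - ω + j * ω)) =
        ∑' j, G j (x - ω) * g (j - 1) := by
      refine tsum_congr fun j => ?_
      have e : x - ω + j * ω = x + ((j - 1 : ℤ) : ℝ) * ω := by push_cast; ring
      have e' : k + 1 - j = k - (j - 1) := by ring
      rw [e, e', hgd]
    have hg0 : g 0 = t x * G' k x := by simp [hgd]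
    rw [e1] at r1
    rw [e2] at r2
    change _ = G k x + ∑' j, G j x * g j at r0
    rw [hg0] at hgs
    rw [r1, r2]
    simp only [ht] at hgs
    linear_combination h.eq k x + hgs + W x * r0
  · intro k x; exact (h.lo k x).trans (hG'lo2 k x)
  · intro k
    have hk := abs_nonneg (k:ℝ)
    have := PB.tsum (l := l) (u := fun p => T p k) (ℓ := fun p => plen p k)
      (b := fun p => Z * lprod y p) (θ := c / 2) (K := K₂ * (|(k:ℝ)| + 1))
      (Λ := 2 * Λ + 2 * Λ₂) (by positivity) (fun p => by have := plen_ge p k; linarith)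
      (by positivity) (by positivity) ?_ (fun p => hTpb p k) (fun p x => hT2 p k x)
      (ls.mul_left _) ?_
    · rw [← mul_assoc] at this; exact this
    · have : c / 2 * K₂ ≤ c / 2 * K₂ * (|(k:ℝ)| + 1) := le_mul_of_one_le_right (by positivity) (by linarith)
      linarith
    · intro x
      refine le_trans ?_ ((h.lo k x).trans (hG'lo2 k x))
      rw [tsum_mul_left]
      have hZ1 : 1 ≤ 2 * Z := by
        have h2 : 1 ≤ exp (c / 2) := one_le_exp (by positivity)
        have h4 : 1 ≤ τb / s := by rw [le_div_iff₀ hs]; linarith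
        have h5 : 1 ≤ B / η := by rw [le_div_iff₀ hη]; linarith
        have h3 : 1 ≤ B / η * (τb / s) := by nlinarith
        have : Z = exp (c / 2) * (B / η * (τb / s)) := by rw [hZ]; ring
        nlinarith
      have h7 : exp (-(c / 2 * (K₂ * (|(k:ℝ)| + 1)))) * (2 * Z) ≤ exp (-(κ₀ * (|(k:ℝ)| + 1))) := by
        rw [← exp_log (by positivity : 0 < 2 * Z), ← exp_add]
        apply exp_le_exp.2
        have hl : 0 ≤ log (2 * Z) := log_nonneg hZ1
        nlinarith [mul_le_mul_of_nonneg_right hK₂b (by linarith : (0:ℝ) ≤ |(k:ℝ)| + 1), mul_nonneg hl hk]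
      refine le_trans ?_ h7
      have : Z * ∑' p, lprod y p ≤ Z * 2 := by gcongr
      have h8 := exp_pos (-(c / 2 * (K₂ * (|(k:ℝ)| + 1))))
      nlinarith
end stepB


namespace Gr
variable {ω κ₀ : ℝ} {l : ℕ} {W : ℝ → ℝ} {G : ℤ → ℝ → ℝ} {B c Λ : ℝ}

lemma mono (h : Gr ω κ₀ l W G B c Λ) {B' c' Λ' : ℝ} (hB : B ≤ B') (hc : c' ≤ c) (h0 : 0 ≤ Λ)
    (hΛ : Λ ≤ Λ') : Gr ω κ₀ l W G B' c' Λ' where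
  Wc := h.Wc
  Wp := h.Wp
  Gp := h.Gp
  eq := h.eq
  up := fun k x => by
    refine (h.up k x).trans ?_
    have := h.Bpos
    have := this.trans_le hB
    gcongr
  lo := h.lo
  pb := fun k => (h.pb k).mono (by positivity) (by gcongr)

lemma alphasum (h : Gr ω κ₀ l W G B c Λ) (hc : 0 < c) (hc1 : c ≤ 1) (hΛ : 0 ≤ Λ)
    {φ : ℝ → ℝ} {Λφ m δ K₁ : ℝ} (hφ : PB l Λφ φ) (hΛφ : 0 ≤ Λφ) (hm : 0 < m)
    (hφm : ∀ x, m ≤ φ x) (hφ1 : ∀ x, φ x ≤ 1) (hδ : 0 < δ) (hK : 1 ≤ K₁) (hKl : l ≤ c / 2 * K₁)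
    (hKb : exp (-(c / 2 * K₁)) * (B * exp (c / 2) * (8 / c)) ≤ δ * (exp (-κ₀) * m))
    {α : ℤ → ℝ} (hα : ∀ k, δ ≤ α k) (hα1 : ∀ k, α k ≤ 1) :
    PB l (2 * (Λ + Λφ) * K₁) (fun x => ∑' k : ℤ, α k * (G k x * φ (x + k * ω))) := by
  have hB := h.Bpos
  obtain ⟨gs, gb⟩ := geom_int (t := c / 2) (by positivity) (by linarith)
  have hφ0 : ∀ x, 0 < φ x := fun x => hm.trans_le (hφm x)
  have hα0 : ∀ k, 0 ≤ α k := fun k => hδ.le.trans (hα k)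
  have hs : Summable (fun k : ℤ => B * exp (c / 2) * exp (-(c / 2 * |(k:ℝ)|))) := gs.mul_left _
  have hle : ∀ (k : ℤ) (x : ℝ), α k * (G k x * φ (x + k * ω)) ≤ B * exp (-(c * |(k:ℝ)|)) := by
    intro k x
    have h1 := h.pos k x
    have h2 := h.up k x
    calc α k * (G k x * φ (x + k * ω)) ≤ 1 * (G k x * 1) := by
          apply mul_le_mul (hα1 k) _ _ zero_le_one
          · exact mul_le_mul_of_nonneg_left (hφ1 _) h1.le
          · exact mul_nonneg h1.le (hφ0 _).le
      _ = G k x := by ring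
      _ ≤ _ := h2
  have hub : ∀ (k : ℤ) (x : ℝ), exp (c / 2 * (|(k:ℝ)| + 1)) * (α k * (G k x * φ (x + k * ω))) ≤
      B * exp (c / 2) * exp (-(c / 2 * |(k:ℝ)|)) := by
    intro k x
    refine (mul_le_mul_of_nonneg_left (hle k x) (exp_pos _).le).trans (le_of_eq ?_)
    have : exp (c / 2 * (|(k:ℝ)| + 1)) * exp (-(c * |(k:ℝ)|)) =
        exp (c / 2) * exp (-(c / 2 * |(k:ℝ)|)) := by
      rw [← exp_add, ← exp_add]; congr 1; ring
    linear_combination B * this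
  refine PB.tsum (l := l) (u := fun (k : ℤ) x => α k * (G k x * φ (x + k * ω)))
    (ℓ := fun k : ℤ => |(k:ℝ)| + 1) (b := fun k : ℤ => B * exp (c / 2) * exp (-(c / 2 * |(k:ℝ)|)))
    (θ := c / 2) (K := K₁) (by positivity) (fun k => by have := abs_nonneg (k:ℝ); linarith)
    (by positivity) (by positivity) hKl ?_ hub hs ?_
  · intro k
    have hk := abs_nonneg (k:ℝ)
    refine ((((h.pb k).mul (hφ.shift _) (by positivity) hΛφ)).cmul (by positivity) (hα0 k)).mono
      (by positivity) ?_
    nlinarith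
  · intro x
    have hsu : Summable (fun k : ℤ => α k * (G k x * φ (x + k * ω))) :=
      Summable.of_nonneg_of_le (fun k => mul_nonneg (hα0 k)
        (mul_nonneg (h.pos k x).le (hφ0 _).le)) (fun k => hle k x)
        ((geom_int hc hc1).1.mul_left B)
    have h1 : α 0 * (G 0 x * φ (x + (0:ℤ) * ω)) ≤ ∑' k : ℤ, α k * (G k x * φ (x + k * ω)) :=
      hsu.le_tsum 0 fun k _ => mul_nonneg (hα0 k)
        (mul_nonneg (h.pos k x).le (hφ0 _).le)
    refine le_trans ?_ h1
    refine le_trans ?_ (le_trans hKb ?_)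
    · rw [tsum_mul_left]
      have : ∑' k : ℤ, exp (-(c / 2 * |(k:ℝ)|)) ≤ 8 / c := by
        refine gb.trans (le_of_eq ?_); field_simp; norm_num
      gcongr
    · have h3 := h.lo 0 x
      simp only [Int.cast_zero, abs_zero, zero_add, mul_one] at h3
      have := hφm (x + (0:ℤ) * ω)
      have := hα 0
      have := hα0 0
      have := (h.pos 0 x).le
      gcongr
end Gr

section stepA
variable {ω κ₀ : ℝ} {l : ℕ} {W : ℝ → ℝ} {G : ℤ → ℝ → ℝ} {B c Λ : ℝ}

set_option maxHeartbeats 1000000 in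
lemma stepA (h : Gr ω κ₀ l W G B c Λ) (hc : 0 < c) (hc1 : c ≤ 1) (hΛ : 0 ≤ Λ)
    {φ : ℝ → ℝ} {Λφ m δ K₁ : ℝ} (hφ : PB l Λφ φ) (hφp : Function.Periodic φ 1)
    (hΛφ : 0 ≤ Λφ) (hm : 0 < m)
    (hφm : ∀ x, m ≤ φ x) (hφ1 : ∀ x, φ x ≤ 1) (hδ : 0 < δ) (hδ1 : δ ≤ 1)
    (hK : 1 ≤ K₁) (hKl : l ≤ c / 2 * K₁)
    (hKb : exp (-(c / 2 * K₁)) * (B * exp (c / 2) * (8 / c)) ≤ δ * (exp (-κ₀) * m))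
    {Λ₂ : ℝ} (hΛ₂ : (2 * (l + 1) + 1) * (2 * (Λ + Λφ) * K₁) ≤ Λ₂) :
    ∃ f τ E : ℝ → ℝ,
      ((∀ x, exp (-κ₀) * m ≤ f x) ∧ (∀ x, f x ≤ B * (4 / c)) ∧
        (∀ x, (W x - τ x) * f x = f (x + ω) + f (x - ω))) ∧
      (Function.Periodic τ 1 ∧ PB l Λ₂ τ ∧ ∀ x, 0 < τ x) ∧
      (Function.Periodic E 1 ∧ PB l Λ₂ E) ∧
      (∀ x, E x * (1 - (1 - δ) * τ x * G 0 x) = 1) ∧ (∀ x, 1 ≤ E x) ∧ (∀ x, E x ≤ 1 / δ) ∧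
      (∀ (k : ℤ) (x : ℝ), τ x * (G k x * φ (x + k * ω)) ≤ φ x) ∧
      (∀ x, (∑' k : ℤ, if k = 0 then 0 else G k x * φ (x + k * ω)) ≤ δ * (G 0 x * φ x) →
        1 / (2 * δ) ≤ E x) := by
  have hB := h.Bpos
  have hφ0 : ∀ x, 0 < φ x := fun x => hm.trans_le (hφm x)
  have habs : ∀ x, |φ x| ≤ 1 := fun x => by rw [abs_of_pos (hφ0 x)]; exact hφ1 x
  have hsum : ∀ x, Summable (fun k : ℤ => G k x * φ (x + k * ω)) := fun x =>
    h.summable hc hc1 x (fun k => habs _)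
  set f : ℝ → ℝ := fun x => ∑' k : ℤ, G k x * φ (x + k * ω) with hf
  set S : ℝ → ℝ := fun x => ∑' k : ℤ, if k = 0 then 0 else G k x * φ (x + k * ω) with hS
  have hfS : ∀ x, f x = G 0 x * φ x + S x := by
    intro x
    simp only [hf, hS]
    rw [(hsum x).tsum_eq_add_tsum_ite 0]
    simp
  have hS0 : ∀ x, 0 ≤ S x := fun x => tsum_nonneg fun k => by
    split_ifs
    · exact le_rfl
    · exact mul_nonneg (h.pos k x).le (hφ0 _).le
  have hGφ : ∀ x, 0 < G 0 x * φ x := fun x => mul_pos (h.pos 0 x) (hφ0 x)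
  set D : ℝ → ℝ := fun x => δ * (G 0 x * φ x) + S x with hD
  have hfk : ∀ (k : ℤ) (x : ℝ), G k x * φ (x + k * ω) ≤ f x := fun k x =>
    (hsum x).le_tsum k fun j _ => mul_nonneg (h.pos j x).le (hφ0 _).le
  have hf0 : ∀ x, 0 < f x := fun x => by rw [hfS]; linarith [hGφ x, hS0 x]
  have hD0 : ∀ x, 0 < D x := fun x => by
    have := mul_pos hδ (hGφ x); simp only [hD]; linarith [hS0 x]
  have hDf : ∀ x, D x ≤ f x := fun x => by
    rw [hfS]; simp only [hD]; have := hGφ x; nlinarith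
  have hfD : ∀ x, δ * f x ≤ D x := fun x => by
    rw [hfS]; simp only [hD]; have := hS0 x; nlinarith
  have hper : ∀ k : ℤ, ∀ x, G k (x + 1) * φ (x + 1 + k * ω) = G k x * φ (x + k * ω) := by
    intro k x
    have e : x + 1 + k * ω = x + k * ω + 1 := by ring
    rw [h.Gp k x, e, hφp]
  have hfp : Function.Periodic f 1 := fun x => tsum_congr fun k => hper k x
  have hSp : Function.Periodic S 1 := fun x => tsum_congr fun k => by rw [hper k x]
  have hDp : Function.Periodic D 1 := fun x => by
    simp only [hD]; rw [hSp x, h.Gp 0 x, hφp x]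
  have hX : 0 ≤ 2 * (Λ + Λφ) * K₁ := by positivity
  set X := 2 * (Λ + Λφ) * K₁ with hXd
  have pbf : PB l X f := by
    have := h.alphasum hc hc1 hΛ hφ hΛφ hm hφm hφ1 hδ hK hKl hKb (α := fun _ => 1)
      (fun _ => hδ1) (fun _ => le_rfl)
    simpa only [one_mul] using this
  have pbD : PB l X D := by
    have := h.alphasum hc hc1 hΛ hφ hΛφ hm hφm hφ1 hδ hK hKl hKb
      (α := fun k => if k = 0 then δ else 1)
      (fun k => by split_ifs <;> linarith) (fun k => by split_ifs <;> linarith)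
    have e : D = fun x => ∑' k : ℤ, (if k = 0 then δ else 1) * (G k x * φ (x + k * ω)) := by
      funext x
      have hs : Summable (fun k : ℤ => (if k = 0 then δ else 1) * (G k x * φ (x + k * ω))) := by
        refine Summable.of_nonneg_of_le (fun k => ?_) (fun k => ?_) (hsum x)
        · have := mul_nonneg (h.pos k x).le (hφ0 (x + k * ω)).le
          split_ifs <;> positivity
        · have := mul_nonneg (h.pos k x).le (hφ0 (x + k * ω)).le
          split_ifs <;> nlinarith
      rw [hs.tsum_eq_add_tsum_ite 0]
      simp only [hD, hS]
      congr 1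
      · simp
      · refine tsum_congr fun k => ?_
        split_ifs <;> simp
    rw [e]; exact this
  have hXφ : Λφ ≤ X := by
    rw [hXd]; nlinarith
  have hl : (0:ℝ) ≤ l := Nat.cast_nonneg l
  have pbτ : PB l Λ₂ (fun x => φ x / f x) := by
    refine (hφ.div pbf hΛφ hX hf0).mono (by positivity) ?_
    refine le_trans ?_ hΛ₂
    linarith
  have pbE : PB l Λ₂ (fun x => f x / D x) := by
    refine (pbf.div pbD hX hX hD0).mono (by positivity) ?_
    refine le_trans ?_ hΛ₂
    linarith
  refine ⟨f, fun x => φ x / f x, fun x => f x / D x, ⟨?_, ?_, ?_⟩, ⟨?_, pbτ, ?_⟩, ⟨?_, pbE⟩,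
    ?_, ?_, ?_, ?_, ?_⟩
  · intro x
    have h1 := hfk 0 x
    have h3 := h.lo 0 x
    simp only [Int.cast_zero, abs_zero, zero_add, mul_one, zero_mul, add_zero] at h1 h3
    have := hφm x
    have := (h.pos 0 x).le
    refine le_trans ?_ h1
    gcongr
  · intro x
    obtain ⟨gs, gb⟩ := geom_int hc hc1
    calc f x ≤ ∑' k : ℤ, B * exp (-(c * |(k:ℝ)|)) := by
          refine (hsum x).tsum_le_tsum (fun k => ?_) (gs.mul_left B)
          have := h.up k x
          have h1 := h.pos k x
          have h2 := hφ1 (x + k * ω)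
          nlinarith
      _ ≤ B * (4 / c) := by rw [tsum_mul_left]; gcongr
  · intro x
    have := h.gsum hc hc1 x (g := fun k : ℤ => φ (x + k * ω)) (fun k => habs _)
    have e1 : f (x + ω) = ∑' k : ℤ, G k (x + ω) * φ (x + ((k + 1 : ℤ):ℝ) * ω) := by
      refine tsum_congr fun k => ?_
      congr 2; push_cast; ring
    have e2 : f (x - ω) = ∑' k : ℤ, G k (x - ω) * φ (x + ((k - 1 : ℤ):ℝ) * ω) := by
      refine tsum_congr fun k => ?_
      congr 2; push_cast; ring
    rw [← e1, ← e2] at this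
    simp only [Int.cast_zero, zero_mul, add_zero] at this
    have h2 : φ x / f x * f x = φ x := div_mul_cancel₀ _ (hf0 x).ne'
    change W x * f x - f (x + ω) - f (x - ω) = φ x at this
    simp only
    linear_combination this - h2
  · intro x; simp only; rw [hφp x, hfp x]
  · intro x; exact div_pos (hφ0 x) (hf0 x)
  · intro x; simp only; rw [hDp x, hfp x]
  · intro x
    have h1 := (hf0 x).ne'
    have h2 := (hD0 x).ne'
    have h3 : D x = f x - (1 - δ) * (φ x * G 0 x) := by rw [hfS]; simp only [hD]; ring
    have : 1 - (1 - δ) * (φ x / f x) * G 0 x = D x / f x := by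
      rw [h3]; field_simp
    simp only
    rw [this]
    field_simp
  · intro x; simp only; rw [le_div_iff₀ (hD0 x)]; linarith [hDf x]
  · intro x; simp only; rw [div_le_div_iff₀ (hD0 x) hδ]; linarith [hfD x]
  · intro k x
    simp only
    rw [div_mul_eq_mul_div, div_le_iff₀ (hf0 x)]
    exact mul_le_mul_of_nonneg_left (hfk k x) (hφ0 x).le
  · intro x hx
    simp only
    rw [div_le_div_iff₀ (by positivity) (hD0 x)]
    have h1 := hS0 x
    rw [hfS]; simp only [hD]
    have : S x ≤ δ * (G 0 x * φ x) := hx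
    nlinarith
end stepA

noncomputable def psi (x : ℝ) : ℝ := (3 + cos (2 * π * x)) / 4

lemma psi_per : Function.Periodic psi 1 := fun x => by
  unfold psi
  rw [mul_add, mul_one, cos_add_two_pi]

lemma psi_eq (x : ℝ) : psi x = 1 - sin (π * nrm x) ^ 2 / 2 := by
  have h1 : cos (2 * π * x) = cos (2 * (π * nrm x)) := by
    unfold nrm
    have : 2 * (π * |x - round x|) = |2 * π * x - round x * (2 * π)| := by
      have : 2 * π * x - round x * (2 * π) = (2 * π) * (x - round x) := by ring
      rw [this, abs_mul, abs_of_pos (two_pi_pos)]; ring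
    rw [this, cos_abs, cos_sub_int_mul_two_pi]
  unfold psi
  rw [h1, cos_two_mul, cos_sq']
  ring

lemma psi_le (x : ℝ) : psi x ≤ 1 - 2 * nrm x ^ 2 := by
  rw [psi_eq]
  have h0 := nrm_nonneg x
  have h1 := nrm_le_half x
  have h2 := mul_le_sin (x := π * nrm x) (by positivity) (by nlinarith [pi_pos])
  have h3 : 2 / π * (π * nrm x) = 2 * nrm x := by field_simp
  rw [h3] at h2
  nlinarith

lemma psi_ge (x : ℝ) : 1 - 5 * nrm x ^ 2 ≤ psi x := by
  rw [psi_eq]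
  have h0 := nrm_nonneg x
  have h1 := nrm_le_half x
  have h2 : |sin (π * nrm x)| ≤ |π * nrm x| := abs_sin_le_abs
  have h3 : sin (π * nrm x) ^ 2 ≤ (π * nrm x) ^ 2 := sq_le_sq.2 h2
  have h4 : π ^ 2 ≤ 10 := by nlinarith [pi_lt_d2, pi_pos]
  nlinarith [sq_nonneg (nrm x), mul_le_mul_of_nonneg_right h4 (sq_nonneg (nrm x))]

lemma psi_half (x : ℝ) : 1 / 2 ≤ psi x := by
  unfold psi; have := neg_one_le_cos (2 * π * x); linarith

lemma psi_one (x : ℝ) : psi x ≤ 1 := by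
  unfold psi; have := cos_le_one (2 * π * x); linarith

lemma psi_pb (l : ℕ) : PB l 7 psi := by
  have h7 : 2 * π ≤ 7 := by nlinarith [pi_lt_d2]
  have hc : ContDiff ℝ l psi := by unfold psi; fun_prop
  refine ⟨hc, fun i hi x => ?_⟩
  have hp := psi_half x
  rcases Nat.eq_zero_or_pos i with rfl | hi0
  · simp only [iteratedDeriv_zero, pow_zero, one_mul]
    rw [abs_of_nonneg (by linarith)]
  · have e : psi = fun x => 3 / 4 + (1 / 4) * cos (2 * π * x) := by funext x; unfold psi; ring
    have h1 : iteratedDeriv i psi x = (1 / 4) * ((2 * π) ^ i * iteratedDeriv i cos (2 * π * x)) := by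
      rw [e, iteratedDeriv_const_add hi0]
      rw [iteratedDeriv_const_mul_field]
      congr 1
      rw [iteratedDeriv_comp_const_mul contDiff_cos]
    rw [h1, abs_mul, abs_mul, abs_of_pos (by norm_num : (0:ℝ) < 1 / 4), abs_of_pos (by positivity)]
    have h2 : |iteratedDeriv i cos (2 * π * x)| ≤ 1 := abs_iteratedDeriv_cos_le_one i _
    have h3 : (2 * π) ^ i ≤ 7 ^ i := pow_le_pow_left₀ (by positivity) h7 i
    have h4 : (0:ℝ) ≤ (2 * π) ^ i := by positivity
    nlinarith


/-- requirements on the scale `n` -/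
structure Ok (l : ℕ) (κ₀ γ : ℝ) (P : ℕ) (n : ℝ) : Prop where
  big : 1000 ≤ n
  hl : 100 * ((l:ℝ) + 1) ≤ n
  hA : exp κ₀ ≤ n
  hγ : 1 / γ ≤ n
  hP : n ^ P ≤ exp n

namespace Ok
variable {l : ℕ} {κ₀ γ : ℝ} {P : ℕ} {n : ℝ}

lemma pos (h : Ok l κ₀ γ P n) : 0 < n := by linarith [h.big]
lemma pw (h : Ok l κ₀ γ P n) (i : ℕ) : 1000 * n ^ i ≤ n ^ (i + 1) := by
  rw [pow_succ, mul_comm (n ^ i)]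
  have := h.pos
  have := h.big
  gcongr
lemma pp (h : Ok l κ₀ γ P n) {i j : ℕ} (hij : i ≤ j) : n ^ i ≤ n ^ j :=
  pow_le_pow_right₀ (by linarith [h.big]) hij
lemma pw' (h : Ok l κ₀ γ P n) {i j : ℕ} (hij : i < j) : 1000 * n ^ i ≤ n ^ j :=
  (h.pw i).trans (h.pp hij)
lemma pw1 (h : Ok l κ₀ γ P n) {j : ℕ} (hij : 1 < j) : 1000 * n ≤ n ^ j := by
  simpa using h.pw' hij
lemma κn (h : Ok l κ₀ γ P n) : κ₀ ≤ n := by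
  have := add_one_le_exp κ₀; linarith [h.hA]
lemma expκ (h : Ok l κ₀ γ P n) : exp (-n) ≤ exp (-κ₀) := exp_le_exp.2 (by linarith [h.κn])
lemma poly (h : Ok l κ₀ γ P n) {j : ℕ} (hj : j ≤ P) : n ^ j ≤ exp n := (h.pp hj).trans h.hP
lemma lin (h : Ok l κ₀ γ P n) (hP : 2 ≤ P) : 1000 * n ≤ exp n :=
  (h.pw1 (by norm_num : 1 < 2)).trans (h.poly hP)
lemma del (h : Ok l κ₀ γ P n) : exp (-n) ≤ 1 / n ^ P := by
  have := h.pos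
  rw [exp_neg, ← one_div]
  exact one_div_le_one_div_of_le (by positivity) h.hP
lemma c1 (h : Ok l κ₀ γ P n) : 1 / n ≤ 1 := by
  rw [div_le_one h.pos]; linarith [h.big]

lemma f1 (h : Ok l κ₀ γ P n) (hP : 2 ≤ P) :
    exp (-(1 / n / 2 * (4 * n ^ 25))) * (exp n * exp (1 / n / 2) * (8 / (1 / n))) ≤
      1 / n ^ P * (exp (-κ₀) * exp (-n ^ 24)) := by
  have hn := h.pos
  have e1 : 1 / n / 2 * (4 * n ^ 25) = 2 * n ^ 24 := by field_simp; norm_num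
  have e2 : 8 / (1 / n) = 8 * n := by field_simp
  rw [e1, e2]
  have h1 : 8 * n ≤ exp n := by linarith [h.lin hP]
  have h2 : exp (1 / n / 2) ≤ exp 1 := exp_le_exp.2 (by linarith [h.c1])
  calc exp (-(2 * n ^ 24)) * (exp n * exp (1 / n / 2) * (8 * n))
      ≤ exp (-(2 * n ^ 24)) * (exp n * exp 1 * exp n) := by gcongr
    _ = exp (-(2 * n ^ 24) + (n + 1 + n)) := by rw [exp_add, exp_add, exp_add]
    _ ≤ exp (-n + (-n + -n ^ 24)) := by
        apply exp_le_exp.2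
        have := h.pw1 (by norm_num : 1 < 24)
        have := h.big
        linarith
    _ = exp (-n) * (exp (-n) * exp (-n ^ 24)) := by rw [exp_add, exp_add]
    _ ≤ _ := by
        have := h.del
        have := h.expκ
        gcongr

lemma f2 (h : Ok l κ₀ γ P n) : (l:ℝ) ≤ 1 / n / 2 * (4 * n ^ 25) := by
  have hn := h.pos
  have e1 : 1 / n / 2 * (4 * n ^ 25) = 2 * n ^ 24 := by field_simp; norm_num
  rw [e1]
  have := h.pw1 (by norm_num : 1 < 24)
  have := h.big
  have := h.hl
  linarith

lemma f3 (h : Ok l κ₀ γ P n) :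
    (2 * ((l:ℝ) + 1) + 1) * (2 * (n + n ^ 24 * 7) * (4 * n ^ 25)) ≤ n ^ 52 := by
  have hn := h.pos
  have h1 : 2 * ((l:ℝ) + 1) + 1 ≤ n := by have := h.hl; have := h.big; linarith
  have h2 : n ≤ n ^ 24 := by have := h.pw1 (by norm_num : 1 < 24); linarith
  calc _ ≤ n * (2 * (n ^ 24 + n ^ 24 * 7) * (4 * n ^ 25)) := by gcongr
    _ = 64 * n ^ 50 := by ring
    _ ≤ 1000 * n ^ 50 := by have : 0 ≤ n ^ 50 := by positivity
                            linarith
    _ ≤ n ^ 52 := h.pw' (by norm_num)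

lemma f4 (h : Ok l κ₀ γ P n) (hP : 2 ≤ P) :
    exp n * (exp κ₀ * exp (-(n ^ 2 / 4))) / (1 / n ^ P) * (16 / (1 / n)) ≤ 1 / 2 := by
  have hn := h.pos
  have h1 : 16 * n ≤ exp n := by linarith [h.lin hP]
  calc exp n * (exp κ₀ * exp (-(n ^ 2 / 4))) / (1 / n ^ P) * (16 / (1 / n))
      = exp n * (exp κ₀ * exp (-(n ^ 2 / 4))) * n ^ P * (16 * n) := by field_simp
    _ ≤ exp n * (exp n * exp (-(n ^ 2 / 4))) * exp n * exp n := by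
        have := exp_le_exp.2 h.κn
        have := h.hP
        gcongr
    _ = exp (n + (n + -(n ^ 2 / 4)) + n + n) := by simp only [exp_add]
    _ ≤ exp (-1) := by
        apply exp_le_exp.2
        have := h.pw1 (by norm_num : 1 < 2)
        have := h.big
        linarith
    _ ≤ 1 / 2 := by
        rw [exp_neg, ← one_div]
        apply one_div_le_one_div_of_le (by norm_num)
        have := add_one_le_exp (1:ℝ); linarith

lemma f5 (h : Ok l κ₀ γ P n) :
    2 * (exp (1 / n / 2) * (exp n / (1 / n ^ P)) * (exp κ₀ / (exp κ₀ * exp (-(n ^ 2 / 4)))))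
      ≤ exp (n ^ 2) := by
  have hn := h.pos
  have e1 : exp κ₀ / (exp κ₀ * exp (-(n ^ 2 / 4))) = exp (n ^ 2 / 4) := by
    rw [exp_neg]; field_simp
  rw [e1]
  have h2 : exp (1 / n / 2) ≤ exp 1 := exp_le_exp.2 (by linarith [h.c1])
  have h3 : 2 ≤ exp 1 := by have := add_one_le_exp (1:ℝ); linarith
  have h4 : exp n / (1 / n ^ P) = exp n * n ^ P := by field_simp
  rw [h4]
  calc 2 * (exp (1 / n / 2) * (exp n * n ^ P) * exp (n ^ 2 / 4))
      ≤ exp 1 * (exp 1 * (exp n * exp n) * exp (n ^ 2 / 4)) := by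
        have := h.hP
        gcongr
    _ = exp (1 + (1 + (n + n) + n ^ 2 / 4)) := by simp only [exp_add]
    _ ≤ _ := by
        apply exp_le_exp.2
        have := h.pw1 (by norm_num : 1 < 2)
        have := h.big
        linarith

lemma f6 (h : Ok l κ₀ γ P n) {X : ℝ} (hX : 0 < X) (hX2 : X ≤ exp (n ^ 2)) :
    (l:ℝ) ≤ 1 / n / 2 * (4 * n ^ 3) ∧ κ₀ + log X ≤ 1 / n / 2 * (4 * n ^ 3) := by
  have hn := h.pos
  have e1 : 1 / n / 2 * (4 * n ^ 3) = 2 * n ^ 2 := by field_simp; norm_num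
  rw [e1]
  have := h.pw1 (by norm_num : 1 < 2)
  have := h.big
  have := h.hl
  have := h.κn
  have : log X ≤ n ^ 2 := by
    rw [log_le_iff_le_exp hX]; exact hX2
  constructor <;> linarith

lemma f7 (h : Ok l κ₀ γ P n) :
    2 * (2 * n + 2 * n ^ 52) * (4 * n ^ 3) ≤ n ^ 60 ∧ exp (n ^ 2) ≤ exp (n ^ 60) ∧
      1 / n ^ 60 ≤ 1 / n / 2 := by
  have hn := h.pos
  refine ⟨?_, exp_le_exp.2 (h.pp (by norm_num)), ?_⟩
  · have h2 : n ≤ n ^ 52 := by have := h.pw1 (by norm_num : 1 < 52); linarith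
    calc _ ≤ 2 * (2 * n ^ 52 + 2 * n ^ 52) * (4 * n ^ 3) := by gcongr
      _ = 32 * n ^ 55 := by ring
      _ ≤ 1000 * n ^ 55 := by have : 0 ≤ n ^ 55 := by positivity
                              linarith
      _ ≤ n ^ 60 := h.pw' (by norm_num)
  · rw [div_div]
    apply one_div_le_one_div_of_le (by positivity)
    have := h.pw1 (by norm_num : 1 < 60); linarith

lemma f8 (h : Ok l κ₀ γ P n) (hκ : 0 ≤ κ₀) {k : ℝ} (hk : k ≤ 4 * (1 / γ + 1) / (1 / (8 * n ^ 4)) ^ 2) :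
    exp (-((1 / (2 * n ^ 4)) ^ 2 * n ^ 24)) ≤ exp (-n ^ 3) * exp (-(κ₀ * (k + 1))) := by
  have hn := h.pos
  rw [← exp_add]
  apply exp_le_exp.2
  have e1 : (1 / (2 * n ^ 4)) ^ 2 * n ^ 24 = n ^ 16 / 4 := by field_simp; norm_num
  have e2 : 4 * (1 / γ + 1) / (1 / (8 * n ^ 4)) ^ 2 = 256 * (1 / γ + 1) * n ^ 8 := by
    generalize 1 / γ = g
    field_simp; ring
  rw [e2] at hk
  have h1 : k ≤ n ^ 11 := by
    calc k ≤ _ := hk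
      _ ≤ 256 * (n + n) * n ^ 8 := by have := h.hγ; have := h.big; gcongr; linarith
      _ = 512 * n ^ 9 := by ring
      _ ≤ 1000 * n ^ 9 := by have : 0 ≤ n ^ 9 := by positivity
                             linarith
      _ ≤ n ^ 11 := h.pw' (by norm_num)
  have h2 : κ₀ * (k + 1) ≤ n * (n ^ 11 + n ^ 11) := by
    have h3 : 1 ≤ n ^ 11 := one_le_pow₀ (by linarith [h.big])
    calc κ₀ * (k + 1) ≤ κ₀ * (n ^ 11 + n ^ 11) := by gcongr
      _ ≤ _ := by have := h.κn; gcongr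
  rw [e1]
  have h4 : n * (n ^ 11 + n ^ 11) = 2 * n ^ 12 := by ring
  have h5 := h.pw' (by norm_num : 12 < 16)
  have h6 := h.pw' (by norm_num : 3 < 16)
  have : 0 < n ^ 3 := by positivity
  have : 0 < n ^ 12 := by positivity
  linarith

end Ok

lemma phi_ratio {r x y : ℝ} (hr : 0 ≤ r) (hx : r ≤ nrm x) (hy : nrm y ≤ r / 4) (K : ℕ) :
    psi x ^ K ≤ exp (-(r ^ 2 * K)) * psi y ^ K := by
  have h1 := psi_le x
  have h2 := psi_ge y
  have h3 : r ≤ 1 / 2 := hx.trans (nrm_le_half x)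
  have h4 : r ^ 2 ≤ nrm x ^ 2 := pow_le_pow_left₀ hr hx 2
  have h5 : nrm y ^ 2 ≤ (r / 4) ^ 2 := pow_le_pow_left₀ (nrm_nonneg y) hy 2
  have h6 : 1 - r ^ 2 ≤ exp (-r ^ 2) := by have := add_one_le_exp (-r ^ 2); linarith
  have h7 : psi x ≤ exp (-r ^ 2) * psi y := by
    have h8 : 1 - 5 * (r / 4) ^ 2 ≤ psi y := by linarith
    have h9 : (1 - r ^ 2) * (1 - 5 * (r / 4) ^ 2) ≤ exp (-r ^ 2) * psi y :=
      mul_le_mul h6 h8 (by nlinarith) (exp_pos _).le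
    nlinarith [sq_nonneg r, sq_nonneg (r ^ 2)]
  have h0 : 0 ≤ psi x := by linarith [psi_half x]
  calc psi x ^ K ≤ (exp (-r ^ 2) * psi y) ^ K := pow_le_pow_left₀ h0 h7 K
    _ = _ := by rw [mul_pow, ← exp_nat_mul]; congr 2; ring

/-- two points with small norm on the same orbit are far apart in time -/
lemma far {ω γ n : ℝ} (hn : 0 < n) (hγ0 : 0 < γ) (hγ : 1 / γ ≤ n)
    (hd : ∀ k : ℤ, k ≠ 0 → γ / |(k:ℝ)| ≤ nrm (k * ω)) {x : ℝ} {j : ℤ} (hj : j ≠ 0)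
    (h1 : nrm x < 1 / (2 * n ^ 4)) (h2 : nrm (x + j * ω) < 1 / (2 * n ^ 4)) : n ^ 3 ≤ |(j:ℝ)| := by
  have hj0 : 0 < |(j:ℝ)| := by simpa using hj
  have h3 := hd j hj
  have h4 := nrm_sub_le (x + j * ω) x
  have e : x + j * ω - x = j * ω := by ring
  rw [e] at h4
  have h5 : γ / |(j:ℝ)| < 1 / n ^ 4 := by
    have : 1 / (2 * n ^ 4) + 1 / (2 * n ^ 4) = 1 / n ^ 4 := by field_simp; norm_num
    linarith
  rw [div_lt_div_iff₀ hj0 (by positivity)] at h5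
  rw [div_le_iff₀ hγ0] at hγ
  have h6 : n ^ 3 ≤ γ * n ^ 4 := by
    have : n ^ 3 * 1 ≤ n ^ 3 * (n * γ) := by gcongr
    nlinarith
  linarith


section
variable {ω κ₀ γ : ℝ} {l P N : ℕ} {W : ℝ → ℝ} {G : ℤ → ℝ → ℝ} {B c Λ : ℝ}

lemma nuB (h : Gr ω κ₀ l W G B c Λ) (ok : Ok l κ₀ γ P N) (hκ : 0 ≤ κ₀) (hγ : 0 < γ)
    (hd : ∀ k : ℤ, k ≠ 0 → γ / |(k:ℝ)| ≤ nrm (k * ω)) {x : ℝ}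
    (hx : 1 / (2 * (N:ℝ) ^ 4) ≤ nrm x) :
    ∃ k : ℤ, psi x ^ (N ^ 24) ≤ exp (-(N:ℝ) ^ 3) * (G k x * psi (x + k * ω) ^ (N ^ 24)) := by
  have hn := ok.pos
  obtain ⟨k, hk, hk2⟩ := density hγ hd (ρ := 1 / (8 * (N:ℝ) ^ 4)) (by positivity) (by
    rw [div_le_one (by positivity)]
    have : (1:ℝ) ≤ (N:ℝ) ^ 4 := one_le_pow₀ (by linarith [ok.big])
    linarith) x
  refine ⟨k, ?_⟩
  have h1 := phi_ratio (r := 1 / (2 * (N:ℝ) ^ 4)) (x := x) (y := x + k * ω) (by positivity) hx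
    (hk2.trans (le_of_eq (by field_simp; norm_num))) (N ^ 24)
  have h2 := ok.f8 hκ hk
  have h3 := h.lo k x
  push_cast at h1
  have hp : 0 ≤ psi (x + k * ω) ^ (N ^ 24) := pow_nonneg (by linarith [psi_half (x + k * ω)]) _
  calc psi x ^ (N ^ 24) ≤ _ := h1
    _ ≤ exp (-(N:ℝ) ^ 3) * exp (-(κ₀ * (|(k:ℝ)| + 1))) * psi (x + k * ω) ^ (N ^ 24) := by gcongr
    _ ≤ exp (-(N:ℝ) ^ 3) * G k x * psi (x + k * ω) ^ (N ^ 24) := by gcongr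
    _ = _ := by ring

set_option maxHeartbeats 1000000 in
lemma offsum (h : Gr ω κ₀ l W G (exp N) (1 / N) Λ) (ok : Ok l κ₀ γ P N) (hP : 2 ≤ P) (hγ : 0 < γ)
    (hd : ∀ k : ℤ, k ≠ 0 → γ / |(k:ℝ)| ≤ nrm (k * ω)) {x : ℝ}
    (hx : nrm x ≤ 1 / (N:ℝ) ^ 60) :
    (∑' k : ℤ, if k = 0 then 0 else G k x * psi (x + k * ω) ^ (N ^ 24)) ≤
      1 / (N:ℝ) ^ P * (G 0 x * psi x ^ (N ^ 24)) := by
  have hn := ok.pos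
  have hbig := ok.big
  set n : ℝ := (N:ℝ) with hnd
  have hφ0 : ∀ x, 0 ≤ psi x ^ (N ^ 24) := fun x => pow_nonneg (by linarith [psi_half x]) _
  have hφ1 : ∀ x, psi x ^ (N ^ 24) ≤ 1 := fun x => pow_le_one₀ (by linarith [psi_half x]) (psi_one x)
  have p2 := ok.pw1 (by norm_num : 1 < 2)
  have hxr : nrm x < 1 / (2 * n ^ 4) := by
    refine hx.trans_lt ?_
    apply one_div_lt_one_div_of_lt (by positivity)
    have := ok.pw' (by norm_num : 4 < 60)
    have : 0 < n ^ 4 := by positivity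
    linarith
  have hterm : ∀ k : ℤ, (if k = 0 then 0 else G k x * psi (x + k * ω) ^ (N ^ 24)) ≤
      exp (n - n ^ 2 / 2) * exp (-(1 / n / 2 * |(k:ℝ)|)) := by
    intro k
    split_ifs with hk
    · positivity
    · have h0 := h.pos k x
      have hup := h.up k x
      have hk0 := abs_nonneg (k:ℝ)
      by_cases hc : nrm (x + k * ω) < 1 / (2 * n ^ 4)
      · have hf := far hn hγ ok.hγ hd hk hxr hc
        have h1 : n ^ 2 / 2 ≤ 1 / n / 2 * |(k:ℝ)| := by
          have : 1 / n / 2 * n ^ 3 = n ^ 2 / 2 := by field_simp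
          rw [← this]; gcongr
        calc G k x * psi (x + k * ω) ^ (N ^ 24) ≤ G k x * 1 := by gcongr; exact hφ1 _
          _ ≤ exp n * exp (-(1 / n * |(k:ℝ)|)) := by linarith
          _ ≤ _ := by
            rw [← exp_add, ← exp_add]; apply exp_le_exp.2
            have : 1 / n * |(k:ℝ)| = 1 / n / 2 * |(k:ℝ)| + 1 / n / 2 * |(k:ℝ)| := by ring
            linarith
      · push Not at hc
        have h00 : nrm 0 = 0 := by simp [nrm]
        have h1 := phi_ratio (r := 1 / (2 * n ^ 4)) (x := x + k * ω) (y := 0) (by positivity) hc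
          (by rw [h00]; positivity) (N ^ 24)
        have e : (1 / (2 * n ^ 4)) ^ 2 * ((N ^ 24 : ℕ):ℝ) = n ^ 16 / 4 := by
          push_cast; rw [← hnd]; field_simp; norm_num
        rw [e] at h1
        have h2 : psi (x + k * ω) ^ (N ^ 24) ≤ exp (-(n ^ 16 / 4)) :=
          h1.trans (mul_le_of_le_one_right (exp_pos _).le (hφ1 _))
        calc G k x * psi (x + k * ω) ^ (N ^ 24)
            ≤ (exp n * exp (-(1 / n * |(k:ℝ)|))) * exp (-(n ^ 16 / 4)) :=
              mul_le_mul hup h2 (hφ0 _) (by positivity)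
          _ ≤ _ := by
            rw [← exp_add, ← exp_add, ← exp_add]; apply exp_le_exp.2
            have : 1 / n * |(k:ℝ)| = 1 / n / 2 * |(k:ℝ)| + 1 / n / 2 * |(k:ℝ)| := by ring
            have : 0 ≤ 1 / n / 2 * |(k:ℝ)| := by positivity
            have := ok.pw' (by norm_num : 2 < 16)
            have : 0 < n ^ 2 := by positivity
            linarith
  obtain ⟨gs, gb⟩ := geom_int (t := 1 / n / 2) (by positivity) (by linarith [ok.c1])
  have hsum : (∑' k : ℤ, if k = 0 then 0 else G k x * psi (x + k * ω) ^ (N ^ 24)) ≤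
      exp (n - n ^ 2 / 2) * (8 * n) := by
    have hs2 := gs.mul_left (exp (n - n ^ 2 / 2))
    have hs1 : Summable (fun k : ℤ => if k = 0 then 0 else G k x * psi (x + k * ω) ^ (N ^ 24)) :=
      Summable.of_nonneg_of_le (fun k => by
        split_ifs
        · exact le_rfl
        · exact mul_nonneg (h.pos k x).le (hφ0 _)) hterm hs2
    refine (hs1.tsum_le_tsum hterm hs2).trans ?_
    rw [tsum_mul_left]
    gcongr
    refine gb.trans (le_of_eq ?_)
    field_simp; norm_num
  refine hsum.trans ?_
  have h8 : 8 * n ≤ exp n := by linarith [ok.lin hP]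
  have hhalf : 1 / 2 ≤ psi x ^ (N ^ 24) := by
    have h1 := psi_ge x
    have h2 : nrm x ^ 2 ≤ (1 / n ^ 60) ^ 2 := pow_le_pow_left₀ (nrm_nonneg x) hx 2
    have h3 : 1 + (-(5 * (1 / n ^ 60) ^ 2)) ≤ psi x := by linarith
    have h60 : 1 / n ^ 60 ≤ 1 := by
      rw [div_le_one (by positivity)]; exact one_le_pow₀ (by linarith)
    have h61 : 0 < 1 / n ^ 60 := by positivity
    have h4 : (5 * (1 / n ^ 60) ^ 2) ≤ 1 / 2 := by
      have : 1 / n ^ 60 ≤ 1 / 1000 := by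
        apply one_div_le_one_div_of_le (by norm_num)
        have := ok.pw1 (by norm_num : 1 < 60)
        linarith
      nlinarith
    have h5 := one_add_mul_le_pow (a := -(5 * (1 / n ^ 60) ^ 2)) (by linarith) (N ^ 24)
    have h6 : (1 + -(5 * (1 / n ^ 60) ^ 2)) ^ (N ^ 24) ≤ psi x ^ (N ^ 24) :=
      pow_le_pow_left₀ (by linarith) h3 _
    refine le_trans ?_ (h5.trans h6)
    push_cast
    rw [← hnd]
    have e : n ^ 24 * -(5 * (1 / n ^ 60) ^ 2) = -(5 / n ^ 96) := by field_simp
    rw [e]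
    have : 5 / n ^ 96 ≤ 1 / 2 := by
      rw [div_le_div_iff₀ (by positivity) (by norm_num)]
      have := ok.pw1 (by norm_num : 1 < 96)
      linarith
    linarith
  have hG := h.lo 0 x
  simp only [Int.cast_zero, abs_zero, zero_add, mul_one] at hG
  have he : exp (-1) ≤ 1 / 2 := by
    rw [exp_neg, ← one_div]
    apply one_div_le_one_div_of_le (by norm_num)
    have := add_one_le_exp (1:ℝ); linarith
  calc exp (n - n ^ 2 / 2) * (8 * n) ≤ exp (n - n ^ 2 / 2) * exp n := by gcongr
    _ = exp (n - n ^ 2 / 2 + n) := by rw [exp_add]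
    _ ≤ exp (-n + (-n + -1)) := by apply exp_le_exp.2; linarith
    _ = exp (-n) * (exp (-n) * exp (-1)) := by rw [exp_add, exp_add]
    _ ≤ 1 / n ^ P * (G 0 x * psi x ^ (N ^ 24)) := by
        have h1 := ok.del
        have h2 := ok.expκ.trans hG
        have h3 := he.trans hhalf
        have := (h.pos 0 x).le
        gcongr

lemma intbound {u : ℝ → ℝ} (hu : Continuous u) (h0 : ∀ x, 0 ≤ u x) {r U ε : ℝ} (hr : 0 < r)
    (hr2 : r ≤ 1 / 2) (hU : ∀ x, u x ≤ U) (hε0 : 0 ≤ ε) (hε : ∀ x, r ≤ nrm x → u x ≤ ε) :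
    ∫ x in (0:ℝ)..1, log (1 + u x) ≤ 2 * r * log (1 + U) + ε := by
  have hc : Continuous (fun x => log (1 + u x)) :=
    (continuous_const.add hu).log fun x => (by linarith [h0 x] : (0:ℝ) < 1 + u x).ne'
  have hi : ∀ a b, IntervalIntegrable (fun x => log (1 + u x)) volume a b :=
    fun a b => hc.intervalIntegrable a b
  rw [← intervalIntegral.integral_add_adjacent_intervals (hi 0 r) (hi r 1),
    ← intervalIntegral.integral_add_adjacent_intervals (hi r (1 - r)) (hi (1 - r) 1)]
  have hL : ∀ x, log (1 + u x) ≤ log (1 + U) := fun x =>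
    log_le_log (by have := h0 x; positivity) (by linarith [hU x])
  have i1 : ∫ x in (0:ℝ)..r, log (1 + u x) ≤ ∫ x in (0:ℝ)..r, log (1 + U) :=
    intervalIntegral.integral_mono_on hr.le (hi _ _) intervalIntegrable_const fun x _ => hL x
  have i3 : ∫ x in (1 - r)..1, log (1 + u x) ≤ ∫ x in (1 - r)..1, log (1 + U) :=
    intervalIntegral.integral_mono_on (by linarith) (hi _ _) intervalIntegrable_const fun x _ => hL x
  have i2 : ∫ x in r..(1 - r), log (1 + u x) ≤ ∫ x in r..(1 - r), ε := by
    refine intervalIntegral.integral_mono_on (by linarith) (hi _ _) intervalIntegrable_const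
      fun x hx => ?_
    have hx1 : r ≤ nrm x := by
      unfold nrm
      rcases le_or_gt (round x) 0 with hz | hz
      · have : ((round x : ℤ) : ℝ) ≤ 0 := by exact_mod_cast hz
        refine le_trans ?_ (le_abs_self _)
        linarith [hx.1]
      · have : (1:ℝ) ≤ ((round x : ℤ) : ℝ) := by exact_mod_cast hz
        refine le_trans ?_ (neg_le_abs _)
        linarith [hx.2]
    have h1 := log_le_sub_one_of_pos (x := 1 + u x) (by have := h0 x; positivity)
    linarith [hε x hx1]
  simp only [intervalIntegral.integral_const, smul_eq_mul] at i1 i2 i3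
  nlinarith

end


section
variable {ω κ₀ γ : ℝ} {l P N : ℕ} {W : ℝ → ℝ} {G : ℤ → ℝ → ℝ} {B c Λ : ℝ}

lemma Gr.sumcont (h : Gr ω κ₀ l W G B c Λ) (hc : 0 < c) (hc1 : c ≤ 1) :
    Continuous (fun x => ∑' k, G k x) ∧ Function.Periodic (fun x => ∑' k, G k x) 1 ∧
    (∀ x, 0 < ∑' k, G k x) ∧ (∀ x, ∑' k, G k x ≤ B * (4 / c)) ∧
    ∀ x, W x * (∑' k, G k x) - (∑' k, G k (x + ω)) - (∑' k, G k (x - ω)) = 1 := by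
  obtain ⟨gs, gb⟩ := geom_int hc hc1
  have hB := h.Bpos
  have hs : ∀ x, Summable (fun k => G k x) := fun x =>
    Summable.of_nonneg_of_le (fun k => (h.pos k x).le) (fun k => h.up k x) (gs.mul_left B)
  refine ⟨?_, ?_, ?_, ?_, ?_⟩
  · refine continuous_tsum (fun k => (h.pb k).1.continuous) (gs.mul_left B) fun k x => ?_
    rw [norm_eq_abs, abs_of_pos (h.pos k x)]; exact h.up k x
  · intro x; exact tsum_congr fun k => h.Gp k x
  · intro x; exact (hs x).tsum_pos (fun k => (h.pos k x).le) 0 (h.pos 0 x)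
  · intro x
    refine ((hs x).tsum_le_tsum (fun k => h.up k x) (gs.mul_left B)).trans ?_
    rw [tsum_mul_left]; gcongr
  · intro x
    have := h.gsum hc hc1 x (g := fun _ => 1) (C := 1) (fun k => by simp)
    simpa using this

lemma Ok.lossnum {n : ℝ} (ok : Ok l κ₀ γ P n) (hP : 2 ≤ P) :
    2 * (1 / (2 * n ^ 4)) * log (1 + exp κ₀ * (exp (n ^ 2) * (8 * n))) +
      exp (-n ^ 3) * (exp (n ^ 2) * (8 * n)) ≤ 1 / n := by
  have hn := ok.pos
  have hbig := ok.big
  have h8 : 8 * n ≤ exp n := by linarith [ok.lin hP]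
  have p2 := ok.pw1 (by norm_num : 1 < 2)
  have p3 := ok.pw' (by norm_num : 2 < 3)
  have hn2 : 0 < n ^ 2 := by positivity
  have hlog : log (1 + exp κ₀ * (exp (n ^ 2) * (8 * n))) ≤ 2 * n ^ 2 := by
    rw [log_le_iff_le_exp (by positivity)]
    have h1 : exp κ₀ * (exp (n ^ 2) * (8 * n)) ≤ exp n * (exp (n ^ 2) * exp n) := by
      have := exp_le_exp.2 ok.κn
      gcongr
    rw [← exp_add, ← exp_add] at h1
    have h2 : exp (n + (n ^ 2 + n)) * 2 ≤ exp (2 * n ^ 2) := by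
      have : 2 ≤ exp 1 := by have := add_one_le_exp (1:ℝ); linarith
      calc exp (n + (n ^ 2 + n)) * 2 ≤ exp (n + (n ^ 2 + n)) * exp 1 := by gcongr
        _ = exp (n + (n ^ 2 + n) + 1) := (exp_add _ _).symm
        _ ≤ _ := by apply exp_le_exp.2; linarith
    have h3 : 1 ≤ exp (n + (n ^ 2 + n)) := one_le_exp (by positivity)
    linarith
  have h1 : 2 * (1 / (2 * n ^ 4)) * log (1 + exp κ₀ * (exp (n ^ 2) * (8 * n))) ≤ 2 / n ^ 2 := by
    calc _ ≤ 2 * (1 / (2 * n ^ 4)) * (2 * n ^ 2) := by gcongr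
      _ = _ := by field_simp
  have h2 : exp (-n ^ 3) * (exp (n ^ 2) * (8 * n)) ≤ 1 / n ^ 2 := by
    calc _ ≤ exp (-n ^ 3) * (exp (n ^ 2) * exp n) := by gcongr
      _ = exp (-n ^ 3 + (n ^ 2 + n)) := by rw [exp_add, exp_add]
      _ ≤ exp (-n) := by apply exp_le_exp.2; linarith
      _ ≤ 1 / n ^ P := ok.del
      _ ≤ 1 / n ^ 2 := one_div_le_one_div_of_le (by positivity) (ok.pp hP)
  have h3 : 2 / n ^ 2 + 1 / n ^ 2 ≤ 1 / n := by
    rw [← add_div, div_le_div_iff₀ (by positivity) hn]; nlinarith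
  linarith

set_option maxHeartbeats 2000000 in
lemma step (ok : Ok l κ₀ γ P N) (hP : P = 3120 * (l + 1)) (hκ : 0 ≤ κ₀) (hγ : 0 < γ)
    (hd : ∀ k : ℤ, k ≠ 0 → γ / |(k:ℝ)| ≤ nrm (k * ω))
    (h : Gr ω κ₀ l W G (exp N) (1 / N) N) :
    ∃ (W' : ℝ → ℝ) (G' : ℤ → ℝ → ℝ) (V : ℝ → ℝ),
      Gr ω κ₀ l W' G' (exp ((N:ℝ) ^ 60)) (1 / (N:ℝ) ^ 60) ((N:ℝ) ^ 60) ∧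
      (∀ x, nrm x ≤ 1 / (N:ℝ) ^ 60 → ((N:ℝ) ^ 60) ^ (52 * l + 2) ≤ G' 0 x) ∧
      (Function.Periodic V 1 ∧ ContDiff ℝ l V) ∧
      Tendsto (fun m => LEn ω (SchrodingerCocycle V) m) atTop (nhds 0) ∧
      (∀ i ≤ l, ∀ x, |iteratedDeriv i (fun y => V y - W' y) x| ≤ 1 / N) ∧
      (∀ m : ℕ, (∀ x, 0 < dir ω W' m x) ∧
        (∫ x in (0:ℝ)..1, log (dir ω W m x)) - m * (1 / N) ≤
          ∫ x in (0:ℝ)..1, log (dir ω W' m x)) ∧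
      ((∀ x, nrm x ≤ 1 / N → (N:ℝ) ^ (52 * l + 2) ≤ G 0 x) →
        ∀ i ≤ l, ∀ x, |iteratedDeriv i (fun y => W' y - W y) x| ≤ 1 / N) := by
  have hP2 : 2 ≤ P := by omega
  have hn := ok.pos
  have hbig := ok.big
  set n : ℝ := (N:ℝ) with hnd
  have hc : 0 < 1 / n := by positivity
  have hc1 := ok.c1
  set δ : ℝ := 1 / n ^ P with hδd
  have hδ : 0 < δ := by positivity
  have hδ1 : δ ≤ 1 := by
    rw [hδd, div_le_one (by positivity)]; exact one_le_pow₀ (by linarith)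
  set φ : ℝ → ℝ := fun x => psi x ^ (N ^ 24) with hφd
  have hφpb : PB l (n ^ 24 * 7) φ := by
    have := (psi_pb l).pow (by norm_num) (N ^ 24)
    push_cast at this
    exact this
  have hφm : ∀ x, exp (-n ^ 24) ≤ φ x := by
    intro x
    have e : exp (-n ^ 24) = exp (-1) ^ (N ^ 24) := by
      rw [← exp_nat_mul]; push_cast; congr 1; ring
    rw [e]
    refine pow_le_pow_left₀ (exp_pos _).le (le_trans ?_ (psi_half x)) _
    rw [exp_neg, ← one_div]
    apply one_div_le_one_div_of_le (by norm_num)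
    have := add_one_le_exp (1:ℝ); linarith
  have hφ1 : ∀ x, φ x ≤ 1 := fun x => pow_le_one₀ (by linarith [psi_half x]) (psi_one x)
  have hφ0 : ∀ x, 0 < φ x := fun x => (exp_pos _).trans_le (hφm x)
  have hφp : Function.Periodic φ 1 := fun x => by simp only [hφd]; rw [psi_per x]
  obtain ⟨f, τ, E, ⟨hf1, hf2, hf3⟩, ⟨hτp, hτpb, hτ0⟩, ⟨hEp, hEpb⟩, hE1, hE2, hE3, hτk, hElo⟩ :=
    stepA h hc hc1 hn.le hφpb hφp (by positivity) (exp_pos (-n ^ 24)) hφm hφ1 hδ hδ1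
      (K₁ := 4 * n ^ 25) (by have := ok.pw1 (by norm_num : 1 < 25); linarith) ok.f2 (ok.f1 hP2) ok.f3
  -- bounds on τ
  have hτG : ∀ x, τ x * G 0 x ≤ 1 := fun x => by
    have h1 := hτk 0 x
    simp only [Int.cast_zero, zero_mul, add_zero] at h1
    have h2 : (τ x * G 0 x) * φ x ≤ 1 * φ x := by linarith
    exact le_of_mul_le_mul_right h2 (hφ0 x)
  have hG0 : ∀ x, exp (-κ₀) ≤ G 0 x := fun x => by
    have hG := h.lo 0 x
    simpa only [Int.cast_zero, abs_zero, zero_add, mul_one] using hG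
  have hτA : ∀ x, τ x ≤ exp κ₀ := fun x => by
    have h1 : τ x * exp (-κ₀) ≤ 1 :=
      (mul_le_mul_of_nonneg_left (hG0 x) (hτ0 x).le).trans (hτG x)
    rwa [exp_neg, ← div_eq_mul_inv, div_le_one (exp_pos _)] at h1
  have hτν : ∀ x, 1 / (2 * n ^ 4) ≤ nrm x → τ x ≤ exp (-n ^ 3) := by
    intro x hx
    obtain ⟨k, hk⟩ := nuB h ok hκ hγ hd hx
    have h1 := (hτk k x).trans hk
    exact le_of_mul_le_mul_right h1 (mul_pos (h.pos k x) (hφ0 _))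
  have hA1 : 1 ≤ exp κ₀ := one_le_exp hκ
  have p2 := ok.pw1 (by norm_num : 1 < 2)
  have p3 := ok.pw' (by norm_num : 2 < 3)
  have hn2 : 0 < n ^ 2 := by positivity
  -- crossing bound
  have hcr : ∀ x (j : ℤ), j ≠ 0 → √ (τ x) * √ (τ (x + j * ω)) ≤
      (exp κ₀ * exp (-(n ^ 2 / 4))) * exp (1 / n / 4 * |(j:ℝ)|) := by
    intro x j hj
    have hj0 := abs_nonneg (j:ℝ)
    have key : ∀ a b : ℝ, 0 < a → 0 < b → a ≤ exp κ₀ → b ≤ exp (-n ^ 3) →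
        √ a * √ b ≤ (exp κ₀ * exp (-(n ^ 2 / 4))) * exp (1 / n / 4 * |(j:ℝ)|) := by
      intro a b ha hb h1 h2
      have h3 : √ a * √ b ≤ exp κ₀ * exp (-(n ^ 2 / 4)) := by
        rw [← sqrt_mul ha.le]
        apply sqrt_le_iff.2 ⟨by positivity, ?_⟩
        calc a * b ≤ exp κ₀ * exp (-n ^ 3) := mul_le_mul h1 h2 hb.le (exp_pos _).le
          _ ≤ (exp κ₀ * exp κ₀) * exp (-(n ^ 2 / 4) + -(n ^ 2 / 4)) := by
              have : exp κ₀ ≤ exp κ₀ * exp κ₀ := le_mul_of_one_le_left (exp_pos _).le hA1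
              gcongr
              linarith
          _ = _ := by rw [exp_add]; ring
      have h4 : 1 ≤ exp (1 / n / 4 * |(j:ℝ)|) := one_le_exp (by positivity)
      refine h3.trans (le_mul_of_one_le_right (by positivity) h4)
    by_cases h1 : nrm x < 1 / (2 * n ^ 4)
    · by_cases h2 : nrm (x + j * ω) < 1 / (2 * n ^ 4)
      · have hf := far hn hγ ok.hγ hd hj h1 h2
        have h3 : √ (τ x) * √ (τ (x + j * ω)) ≤ exp κ₀ := by
          rw [← sqrt_mul (hτ0 x).le]
          apply sqrt_le_iff.2 ⟨by positivity, ?_⟩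
          rw [sq]
          exact mul_le_mul (hτA _) (hτA _) (hτ0 _).le (exp_pos _).le
        refine h3.trans ?_
        rw [mul_assoc, ← exp_add]
        refine le_mul_of_one_le_right (exp_pos _).le (one_le_exp ?_)
        have : 1 / n / 4 * n ^ 3 = n ^ 2 / 4 := by field_simp
        have h5 : 1 / n / 4 * n ^ 3 ≤ 1 / n / 4 * |(j:ℝ)| := by gcongr
        linarith
      · push Not at h2
        exact key _ _ (hτ0 _) (hτ0 _) (hτA _) (hτν _ h2)
    · push Not at h1
      rw [mul_comm (√ (τ x))]
      exact key _ _ (hτ0 _) (hτ0 _) (hτA _) (hτν _ h1)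
  have hsτ : exp κ₀ * exp (-(n ^ 2 / 4)) ≤ exp κ₀ := by
    refine mul_le_of_le_one_right (exp_pos _).le (exp_le_one_iff.2 ?_)
    linarith
  have hX2 := ok.f5
  have hX0 : 0 < 2 * (exp (1 / n / 2) * (exp n / (1 / n ^ P)) *
      (exp κ₀ / (exp κ₀ * exp (-(n ^ 2 / 4))))) := by positivity
  obtain ⟨f6a, f6b⟩ := ok.f6 hX0 hX2
  obtain ⟨f7a, f7b, f7c⟩ := ok.f7
  have hηB : δ ≤ exp n := hδ1.trans (one_le_exp hn.le)
  obtain ⟨G', hG', hG'0⟩ := stepB h hc hc1 hn.le (by positivity : (0:ℝ) ≤ n ^ 52) hκ hτp hτpb hτ0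
    hEp hEpb (a := 1 - δ) (by linarith) (by linarith) hδ hE1 hE2 hE3 hτA
    (s := exp κ₀ * exp (-(n ^ 2 / 4))) (by positivity) hsτ hcr hηB (ok.f4 hP2)
    (K₂ := 4 * n ^ 3) (by linarith) f6a f6b
  have hG'1 : Gr ω κ₀ l (fun x => W x - (1 - δ) * τ x) G' (exp (n ^ 2)) (1 / n / 2) (n ^ 60) :=
    hG'.mono hX2 le_rfl (by positivity) f7a
  have hG'2 : Gr ω κ₀ l (fun x => W x - (1 - δ) * τ x) G' (exp (n ^ 60)) (1 / n ^ 60) (n ^ 60) :=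
    hG'1.mono f7b f7c (by positivity) le_rfl
  have hτd : ∀ i ≤ l, ∀ x, |iteratedDeriv i τ x| ≤ n ^ (52 * l) * τ x := by
    intro i hi x
    refine (hτpb.2 i hi x).trans ?_
    have : (n ^ 52) ^ i ≤ n ^ (52 * l) := by
      rw [← pow_mul]; exact ok.pp (by omega)
    have := hτ0 x
    gcongr
  refine ⟨fun x => W x - (1 - δ) * τ x, G', fun x => W x - τ x, hG'2, ?_, ⟨?_, ?_⟩, ?_, ?_, ?_, ?_⟩
  · intro x hx
    have h1 := offsum h ok hP2 hγ hd hx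
    have h2 := hElo x h1
    refine le_trans ?_ (hG'0 x)
    calc (n ^ 60) ^ (52 * l + 2) ≤ 1 / (2 * δ) * exp (-κ₀) := by
          have e : 1 / (2 * δ) * exp (-κ₀) = n ^ P / (2 * exp κ₀) := by
            rw [hδd, exp_neg]; field_simp
          rw [e, le_div_iff₀ (by positivity)]
          calc (n ^ 60) ^ (52 * l + 2) * (2 * exp κ₀) ≤ (n ^ 60) ^ (52 * l + 2) * n ^ 2 := by
                gcongr; have := ok.hA; linarith
            _ = n ^ (60 * (52 * l + 2) + 2) := by rw [← pow_mul, ← pow_add]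
            _ ≤ n ^ P := ok.pp (by omega)
      _ ≤ E x * G 0 x := by
          have := hG0 x
          have : 0 < E x := by linarith [hE2 x]
          gcongr
  · intro x; simp only; rw [h.Wp x, hτp x]
  · exact h.Wc.sub hτpb.1
  · exact LE_zero (f := f) (by positivity) hf1 hf2 hf3
  · intro i hi x
    have e : (fun y => W y - τ y - (W y - (1 - δ) * τ y)) = fun y => (-δ) * τ y := by
      funext y; ring
    rw [e, iteratedDeriv_const_mul_field, abs_mul, abs_neg, abs_of_pos hδ]
    calc δ * |iteratedDeriv i τ x| ≤ δ * (n ^ (52 * l) * n) := by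
          have := hτd i hi x
          have h2 : τ x ≤ n := (hτA x).trans ok.hA
          have : n ^ (52 * l) * τ x ≤ n ^ (52 * l) * n := by gcongr
          gcongr
          linarith
      _ ≤ 1 / n := by
          rw [hδd, le_div_iff₀ hn, one_div, ← one_div, div_mul_eq_mul_div, div_mul_eq_mul_div,
            div_le_one (by positivity)]
          calc 1 * (n ^ (52 * l) * n) * n = n ^ (52 * l + 2) := by ring
            _ ≤ n ^ P := ok.pp (by omega)
  · intro m
    obtain ⟨s1, s2, s3, s4, s5⟩ := hG'1.sumcont (by positivity) (by linarith)
    refine loss h.Wc.continuous hG'1.Wc.continuous s1 h.Wp hG'1.Wp s2 ?_ s3 s5 ?_ m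
    · intro x
      have := mul_nonneg (by linarith : 0 ≤ 1 - δ) (hτ0 x).le
      linarith
    · have e4 : 4 / (1 / n / 2) = 8 * n := by field_simp; norm_num
      rw [e4] at s4
      have hu : ∀ x, (W x - (W x - (1 - δ) * τ x)) * ∑' k, G' k x =
          ((1 - δ) * τ x) * ∑' k, G' k x := fun x => by ring
      have hle : ∀ x, (1 - δ) * τ x ≤ τ x := fun x => by
        have := mul_nonneg hδ.le (hτ0 x).le; linarith
      have hge : ∀ x, 0 ≤ (1 - δ) * τ x := fun x => mul_nonneg (by linarith) (hτ0 x).le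
      have hr2 : 1 / (2 * n ^ 4) ≤ 1 / 2 := by
        apply one_div_le_one_div_of_le (by norm_num)
        have : 1 ≤ n ^ 4 := one_le_pow₀ (by linarith)
        linarith
      refine le_trans (le_of_eq (intervalIntegral.integral_congr fun x _ => by
        change log (1 + (W x - (W x - (1 - δ) * τ x)) * ∑' k, G' k x) =
          log (1 + ((1 - δ) * τ x) * ∑' k, G' k x)
        rw [hu x])) ?_
      refine (intbound (u := fun x => ((1 - δ) * τ x) * ∑' k, G' k x)
        ((continuous_const.mul hτpb.1.continuous).mul s1)
        (fun x => mul_nonneg (hge x) (s3 x).le) (r := 1 / (2 * n ^ 4)) (by positivity) hr2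
        (U := exp κ₀ * (exp (n ^ 2) * (8 * n))) (fun x => ?_)
        (ε := exp (-n ^ 3) * (exp (n ^ 2) * (8 * n))) (by positivity) (fun x hx => ?_)).trans
        (ok.lossnum hP2)
      · exact mul_le_mul ((hle x).trans (hτA x)) (s4 x) (s3 x).le (exp_pos _).le
      · exact mul_le_mul ((hle x).trans (hτν x hx)) (s4 x) (s3 x).le (exp_pos _).le
  · intro hbigG i hi x
    have e : (fun y => W y - (1 - δ) * τ y - W y) = fun y => (-(1 - δ)) * τ y := by
      funext y; ring
    rw [e, iteratedDeriv_const_mul_field, abs_mul, abs_neg, abs_of_nonneg (by linarith)]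
    have hτs : τ x ≤ 1 / n ^ (52 * l + 2) := by
      by_cases hx : nrm x ≤ 1 / n
      · rw [le_div_iff₀ (by positivity)]
        exact (mul_le_mul_of_nonneg_left (hbigG x hx) (hτ0 x).le).trans (hτG x)
      · push Not at hx
        have h1 : 1 / (2 * n ^ 4) ≤ nrm x := by
          refine le_trans ?_ hx.le
          apply one_div_le_one_div_of_le hn
          have := ok.pw1 (by norm_num : 1 < 4)
          linarith
        refine (hτν x h1).trans ?_
        calc exp (-n ^ 3) ≤ exp (-n) := by apply exp_le_exp.2; linarith
          _ ≤ 1 / n ^ P := ok.del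
          _ ≤ _ := one_div_le_one_div_of_le (by positivity) (ok.pp (by omega))
    have h1 := hτd i hi x
    calc (1 - δ) * |iteratedDeriv i τ x| ≤ 1 * (n ^ (52 * l) * (1 / n ^ (52 * l + 2))) := by
          apply mul_le_mul (by linarith) _ (abs_nonneg _) zero_le_one
          refine h1.trans ?_
          gcongr
      _ = 1 / n ^ 2 := by rw [pow_add]; field_simp
      _ ≤ 1 / n := by
          apply one_div_le_one_div_of_le hn; linarith

end


section

lemma Ok.eventually (l : ℕ) (κ₀ γ : ℝ) (P : ℕ) : ∃ N₀ : ℕ, ∀ N : ℕ, N₀ ≤ N → Ok l κ₀ γ P N := by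
  have h1 : ∀ a : ℝ, ∀ᶠ N : ℕ in atTop, a ≤ (N:ℝ) := fun a =>
    tendsto_natCast_atTop_atTop.eventually_ge_atTop a
  have h2 : ∀ᶠ N : ℕ in atTop, (N:ℝ) ^ P ≤ exp N := by
    have h3 : ∀ᶠ x : ℝ in atTop, x ^ P ≤ exp x := by
      have := (isLittleO_pow_exp_atTop (n := P)).bound (c := 1) one_pos
      filter_upwards [this] with x hx
      rw [Real.norm_eq_abs, Real.norm_eq_abs, abs_of_pos (exp_pos x), one_mul] at hx
      exact (le_abs_self _).trans hx
    exact tendsto_natCast_atTop_atTop.eventually h3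
  have h := (((h1 1000).and (h1 (100 * ((l:ℝ) + 1)))).and ((h1 (exp κ₀)).and (h1 (1 / γ)))).and h2
  obtain ⟨N₀, hN⟩ := eventually_atTop.1 h
  exact ⟨N₀, fun N hle => ⟨(hN N hle).1.1.1, (hN N hle).1.1.2, (hN N hle).1.2.1,
    (hN N hle).1.2.2, (hN N hle).2⟩⟩

lemma Gr.init {ω κ₀ : ℝ} {l : ℕ} {n : ℝ} (hκ : 1 ≤ κ₀) (hn : 1 ≤ n) :
    Gr ω κ₀ l (fun _ => exp κ₀ + exp (-κ₀))
      (fun k _ => exp (-(κ₀ * |(k:ℝ)|)) / (exp κ₀ - exp (-κ₀))) (exp n) (1 / n) n := by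
  have e2 : 2 ≤ exp κ₀ := by have := add_one_le_exp κ₀; linarith
  have e1 : exp (-κ₀) ≤ 1 := exp_le_one_iff.2 (by linarith)
  have e0 := exp_pos (-κ₀)
  have hD : 1 ≤ exp κ₀ - exp (-κ₀) := by linarith
  have hD0 : exp κ₀ - exp (-κ₀) ≠ 0 := by linarith
  have hmul : exp κ₀ * exp (-κ₀) = 1 := by rw [← exp_add]; simp
  refine ⟨contDiff_const, fun x => rfl, fun k x => rfl, ?_, ?_, ?_, ?_⟩
  · intro k x
    rcases lt_trichotomy k 0 with hk | hk | hk
    · have hk' : (k:ℝ) ≤ -1 := by exact_mod_cast (by omega : k ≤ -1)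
      rw [if_neg hk.ne]
      push_cast
      rw [abs_of_nonpos (by linarith : (k:ℝ) ≤ 0), abs_of_nonpos (by linarith : (k:ℝ) - 1 ≤ 0),
        abs_of_nonpos (by linarith : (k:ℝ) + 1 ≤ 0)]
      rw [show -(κ₀ * -((k:ℝ) - 1)) = -(κ₀ * -(k:ℝ)) + -κ₀ by ring,
        show -(κ₀ * -((k:ℝ) + 1)) = -(κ₀ * -(k:ℝ)) + κ₀ by ring, exp_add, exp_add]
      field_simp; ring
    · subst hk
      simp only [Int.cast_zero, abs_zero, if_true, zero_sub, zero_add, Int.cast_neg, Int.cast_one,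
        abs_neg, abs_one, mul_zero, neg_zero, exp_zero, mul_one]
      field_simp; ring
    · have hk' : 1 ≤ (k:ℝ) := by exact_mod_cast (by omega : 1 ≤ k)
      rw [if_neg hk.ne']
      push_cast
      rw [abs_of_nonneg (by linarith : 0 ≤ (k:ℝ)), abs_of_nonneg (by linarith : 0 ≤ (k:ℝ) - 1),
        abs_of_nonneg (by linarith : 0 ≤ (k:ℝ) + 1)]
      rw [show -(κ₀ * ((k:ℝ) - 1)) = -(κ₀ * (k:ℝ)) + κ₀ by ring,
        show -(κ₀ * ((k:ℝ) + 1)) = -(κ₀ * (k:ℝ)) + -κ₀ by ring, exp_add, exp_add]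
      field_simp; ring
  · intro k x
    have hk := abs_nonneg (k:ℝ)
    have hle : 1 / n ≤ κ₀ := by
      rw [div_le_iff₀ (by linarith)]; nlinarith
    calc exp (-(κ₀ * |(k:ℝ)|)) / (exp κ₀ - exp (-κ₀)) ≤ exp (-(κ₀ * |(k:ℝ)|)) :=
          div_le_self (exp_pos _).le hD
      _ ≤ exp (-(1 / n * |(k:ℝ)|)) := by
          apply exp_le_exp.2; have := mul_le_mul_of_nonneg_right hle hk; linarith
      _ ≤ exp n * exp (-(1 / n * |(k:ℝ)|)) :=
          le_mul_of_one_le_left (exp_pos _).le (one_le_exp (by linarith))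
  · intro k x
    rw [le_div_iff₀ (by linarith)]
    rw [show -(κ₀ * (|(k:ℝ)| + 1)) = -(κ₀ * |(k:ℝ)|) + -κ₀ by ring, exp_add, mul_assoc]
    have : exp (-κ₀) * (exp κ₀ - exp (-κ₀)) ≤ 1 := by nlinarith
    exact mul_le_of_le_one_right (exp_pos _).le this
  · intro k
    have hk := abs_nonneg (k:ℝ)
    exact PB.const (div_nonneg (exp_pos _).le (by linarith)) (by positivity)

lemma tail_bound {l : ℕ} {u : ℕ → ℝ → ℝ} (hu : ∀ n, ContDiff ℝ l (u n)) {C : ℝ}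
    (hb : ∀ n, ∀ i ≤ l, ∀ x, |iteratedDeriv i (u n) x| ≤ C * (1 / 2) ^ n) :
    ContDiff ℝ l (fun x => ∑' n, u n x) ∧
    ∀ i ≤ l, ∀ x, |iteratedDeriv i (fun x => ∑' n, u n x) x| ≤ C * 2 := by
  have hs : Summable (fun n : ℕ => C * (1 / 2 : ℝ) ^ n) := summable_geometric_two.mul_left C
  have key2 : ∀ (i : ℕ) (p : ℕ) (x : ℝ), (i : ℕ∞) ≤ (l : ℕ∞) → ‖iteratedFDeriv ℝ i (u p) x‖ ≤
      C * (1 / 2 : ℝ) ^ p := by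
    intro i p x hi
    rw [norm_iteratedFDeriv_eq_norm_iteratedDeriv]
    exact hb p i (by exact_mod_cast hi) x
  have hsum : ∀ k : ℕ, (k : ℕ∞) ≤ (l : ℕ∞) → Summable (fun n : ℕ => C * (1 / 2 : ℝ) ^ n) :=
    fun k _ => hs
  have hcd : ∀ p, ContDiff ℝ ((l : ℕ∞) : WithTop ℕ∞) (u p) := fun p => by exact_mod_cast hu p
  refine ⟨by exact_mod_cast contDiff_tsum hcd hsum key2, fun i hi x => ?_⟩
  have e := iteratedFDeriv_tsum_apply hcd hsum key2 (k := i) (by exact_mod_cast hi) x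
  rw [← Real.norm_eq_abs, ← norm_iteratedFDeriv_eq_norm_iteratedDeriv, e]
  have := tsum_of_norm_bounded hs.hasSum fun p => key2 i p x (by exact_mod_cast hi)
  rwa [tsum_mul_left, tsum_geometric_two] at this

lemma Cl_limit {l : ℕ} {W : ℕ → ℝ → ℝ} (hW : ∀ n, ContDiff ℝ l (W n))
    (hb : ∀ n, ∀ i ≤ l, ∀ x, |iteratedDeriv i (fun y => W (n + 1) y - W n y) x| ≤ (1 / 2) ^ n) :
    ∃ v : ℝ → ℝ, ContDiff ℝ l v ∧ (∀ x, Tendsto (fun n => W n x) atTop (nhds (v x))) ∧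
      ∀ n, ∀ i ≤ l, ∀ x, |iteratedDeriv i (fun y => v y - W n y) x| ≤ (1 / 2) ^ n * 2 := by
  set u : ℕ → ℕ → ℝ → ℝ := fun n k y => W (n + k + 1) y - W (n + k) y with hu
  have hT := fun n => tail_bound (l := l) (u := u n) (C := (1 / 2) ^ n)
    (fun k => (hW _).sub (hW _))
    (fun k i hi x => (hb (n + k) i hi x).trans (by rw [pow_add]))
  have hS : ∀ n x, Summable (fun k => u n k x) := fun n x => by
    refine Summable.of_norm_bounded (g := fun k : ℕ => (1 / 2 : ℝ) ^ n * (1 / 2) ^ k)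
      (summable_geometric_two.mul_left _) fun k => ?_
    have := hb (n + k) 0 (Nat.zero_le _) x
    rw [iteratedDeriv_zero, pow_add] at this
    exact this
  have hlim : ∀ n x, Tendsto (fun k => W (n + k) x) atTop (nhds (W n x + ∑' k, u n k x)) := by
    intro n x
    have h1 := (hS n x).hasSum.tendsto_sum_nat
    have h2 : ∀ m, ∑ k ∈ Finset.range m, u n k x = W (n + m) x - W n x := fun m =>
      Finset.sum_range_sub (fun k => W (n + k) x) m
    simp only [h2] at h1
    have h3 := h1.const_add (W n x)
    simpa using h3
  set v : ℝ → ℝ := fun x => W 0 x + ∑' k, u 0 k x with hv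
  have hlim0 : ∀ x, Tendsto (fun n => W n x) atTop (nhds (v x)) := fun x => by
    simpa using hlim 0 x
  refine ⟨v, (hW 0).add (hT 0).1, hlim0, fun n i hi x => ?_⟩
  have e : (fun y => v y - W n y) = fun y => ∑' k, u n k y := by
    funext y
    have h1 := hlim n y
    have h2 : Tendsto (fun k => W (n + k) y) atTop (nhds (v y)) := by
      have := (tendsto_add_atTop_iff_nat n).2 (hlim0 y)
      simpa [add_comm] using this
    have := tendsto_nhds_unique h2 h1
    rw [this]; ring
  rw [e]
  exact (hT n).2 i hi x

/-- The inductive invariant of the construction. -/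
def SInv (ω κ : ℝ) (l : ℕ) (N : ℕ) (W : ℝ → ℝ) : Prop :=
  (∃ G, Gr ω (κ + 1) l W G (exp N) (1 / N) N ∧
    ∀ x, nrm x ≤ 1 / N → (N:ℝ) ^ (52 * l + 2) ≤ G 0 x) ∧
  ∀ m : ℕ, (∀ x, 0 < dir ω W m x) ∧ m * (κ + 2 / N) ≤ ∫ x in (0:ℝ)..1, log (dir ω W m x)

lemma SInv.init {ω κ γ : ℝ} {l P N : ℕ} (ok : Ok l (κ + 1) γ P N) (hP : P = 3120 * (l + 1))
    (hκ : 0 < κ) (hγ : 0 < γ) (hd : ∀ k : ℤ, k ≠ 0 → γ / |(k:ℝ)| ≤ nrm (k * ω)) :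
    ∃ W, SInv ω κ l (N ^ 60) W := by
  have hbig := ok.big
  have h0 : Gr ω (κ + 1) l _ _ (exp N) (1 / N) N := Gr.init (by linarith) (by linarith)
  obtain ⟨W', G', V, h1, h2, -, -, -, h3, -⟩ := step ok hP (by linarith) hγ hd h0
  refine ⟨W', ⟨G', by push_cast; exact h1, by push_cast; exact h2⟩, fun m => ⟨(h3 m).1, ?_⟩⟩
  refine le_trans ?_ (h3 m).2
  have hc : Continuous (fun _ : ℝ => exp (κ + 1) + exp (-(κ + 1))) := continuous_const
  have hpos : ∀ x, 0 < dir ω (fun _ => exp (κ + 1) + exp (-(κ + 1))) m x := fun x =>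
    (exp_pos _).trans_le (dir_const m x)
  have h4 : (κ + 1) * m ≤ ∫ x in (0:ℝ)..1,
      log (dir ω (fun _ => exp (κ + 1) + exp (-(κ + 1))) m x) := by
    have h5 : ∫ x in (0:ℝ)..1, (κ + 1) * (m:ℝ) = (κ + 1) * m := by simp
    rw [← h5]
    refine intervalIntegral.integral_mono_on zero_le_one (by simp)
      (((dir_continuous hc m).log fun x => (hpos x).ne').intervalIntegrable _ _) fun x _ => ?_
    rw [le_log_iff_exp_le (hpos x)]
    exact dir_const m x
  have hm : (0:ℝ) ≤ m := Nat.cast_nonneg m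
  have hN : (N:ℝ) ≤ ((N ^ 60 : ℕ) : ℝ) := by
    push_cast; exact le_self_pow₀ (by linarith) (by norm_num)
  have a1 : 1 / (N:ℝ) ≤ 1 / 1000 := one_div_le_one_div_of_le (by norm_num) hbig
  have a2 : 2 / ((N ^ 60 : ℕ) : ℝ) ≤ 2 / 1000 := by gcongr; linarith
  have : (m:ℝ) * (κ + 2 / ((N ^ 60 : ℕ) : ℝ)) ≤ m * (κ + 1 - 1 / N) := by gcongr; linarith
  linarith

lemma SInv.next {ω κ γ : ℝ} {l P N : ℕ} {W : ℝ → ℝ} (ok : Ok l (κ + 1) γ P N)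
    (hP : P = 3120 * (l + 1))
    (hκ : 0 < κ) (hγ : 0 < γ) (hd : ∀ k : ℤ, k ≠ 0 → γ / |(k:ℝ)| ≤ nrm (k * ω))
    (h : SInv ω κ l N W) :
    ∃ W' V, SInv ω κ l (N ^ 60) W' ∧ (Function.Periodic V 1 ∧ ContDiff ℝ l V) ∧
      Tendsto (fun m => LEn ω (SchrodingerCocycle V) m) atTop (nhds 0) ∧
      (∀ i ≤ l, ∀ x, |iteratedDeriv i (fun y => V y - W' y) x| ≤ 1 / N) ∧
      ∀ i ≤ l, ∀ x, |iteratedDeriv i (fun y => W' y - W y) x| ≤ 1 / N := by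
  have hbig := ok.big
  obtain ⟨⟨G, hG, hB⟩, hI⟩ := h
  obtain ⟨W', G', V, h1, h2, h3, h4, h5, h6, h7⟩ := step ok hP (by linarith) hγ hd hG
  refine ⟨W', V, ⟨⟨G', by push_cast; exact h1, by push_cast; exact h2⟩,
    fun m => ⟨(h6 m).1, ?_⟩⟩, h3, h4, h5, h7 hB⟩
  refine le_trans ?_ (h6 m).2
  have hm : (0:ℝ) ≤ m := Nat.cast_nonneg m
  have hN : 2 * (N:ℝ) ≤ ((N ^ 60 : ℕ) : ℝ) := by
    push_cast
    calc 2 * (N:ℝ) ≤ N ^ 2 := by nlinarith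
      _ ≤ _ := pow_le_pow_right₀ (by linarith) (by norm_num)
  have a2 : 2 / ((N ^ 60 : ℕ) : ℝ) ≤ 1 / N := by
    calc 2 / ((N ^ 60 : ℕ) : ℝ) ≤ 2 / (2 * N) := by gcongr
      _ = 1 / N := by field_simp
  have e : 2 / (N:ℝ) = 1 / N + 1 / N := by ring
  have : (m:ℝ) * (κ + 2 / ((N ^ 60 : ℕ) : ℝ)) ≤ m * (κ + 2 / N - 1 / N) := by
    gcongr; rw [e]; linarith
  have := (hI m).2
  linarith

end

theorem schrodinger_positive_LE_not_Cl_open_approx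
    (ω : ℝ) (hω : Irrational ω)
    (M : ℝ) (hM : 1 ≤ M) (hbt : ∀ k : ℕ, cfDen ω (k + 1) ≤ M * cfDen ω k)
    (l : ℕ) (κ : ℝ) (hκ : 0 < κ) :
    ∃ (v : ℝ → ℝ) (vseq : ℕ → ℝ → ℝ),
      Function.Periodic v 1 ∧ ContDiff ℝ l v ∧
      (∀ n, Function.Periodic (vseq n) 1 ∧ ContDiff ℝ l (vseq n)) ∧
      -- (i) L(S_v) ≥ κ
      (∃ L : ℝ, κ ≤ L ∧
        Tendsto (fun m => LEn ω (SchrodingerCocycle v) m) atTop (nhds L)) ∧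
      -- (ii) L(S_{v_n}) = 0 for every n
      (∀ n, Tendsto (fun m => LEn ω (SchrodingerCocycle (vseq n)) m) atTop (nhds 0)) ∧
      -- (iii) ‖v_n − v‖_{C^l} → 0
      (∀ ε : ℝ, 0 < ε → ∃ N : ℕ, ∀ n ≥ N, ∀ j ≤ l, ∀ x : ℝ,
        |iteratedDeriv j (fun y => vseq n y - v y) x| ≤ ε) := by
  obtain ⟨γ, hγ, hγ1, hd⟩ := dioph ω hω M hM hbt
  obtain ⟨N₀, hN₀⟩ := Ok.eventually l (κ + 1) γ (3120 * (l + 1))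
  have hge : ∀ N, N₀ ≤ N → N₀ ≤ N ^ 60 := fun N h => h.trans (Nat.le_self_pow (by norm_num) N)
  obtain ⟨W0, hW0⟩ := SInv.init (hN₀ N₀ le_rfl) rfl hκ hγ hd
  let S := {p : ℕ × (ℝ → ℝ) // N₀ ≤ p.1 ∧ SInv ω κ l p.1 p.2}
  have hex : ∀ s : S, ∃ t : S × (ℝ → ℝ), t.1.1.1 = s.1.1 ^ 60 ∧
      (Function.Periodic t.2 1 ∧ ContDiff ℝ l t.2) ∧
      Tendsto (fun m => LEn ω (SchrodingerCocycle t.2) m) atTop (nhds 0) ∧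
      (∀ i ≤ l, ∀ x, |iteratedDeriv i (fun y => t.2 y - t.1.1.2 y) x| ≤ 1 / s.1.1) ∧
      ∀ i ≤ l, ∀ x, |iteratedDeriv i (fun y => t.1.1.2 y - s.1.2 y) x| ≤ 1 / s.1.1 := by
    rintro ⟨⟨N, W⟩, h1, h2⟩
    obtain ⟨W', V, a1, a2, a3, a4, a5⟩ := SInv.next (hN₀ N h1) rfl hκ hγ hd h2
    exact ⟨⟨⟨⟨N ^ 60, W'⟩, hge N h1, a1⟩, V⟩, rfl, a2, a3, a4, a5⟩
  choose F hF1 hF2 hF3 hF4 hF5 using hex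
  let s : ℕ → S := fun n => Nat.rec ⟨⟨N₀ ^ 60, W0⟩, hge N₀ le_rfl, hW0⟩ (fun _ t => (F t).1) n
  have hs : ∀ n, s (n + 1) = (F (s n)).1 := fun n => rfl
  set W : ℕ → ℝ → ℝ := fun n => (s n).1.2 with hWd
  set V : ℕ → ℝ → ℝ := fun n => (F (s n)).2 with hVd
  have hbigN : ∀ n, 1000 ≤ (s n).1.1 := fun n => by
    exact_mod_cast (hN₀ _ (s n).2.1).big
  have h2n : ∀ n, 2 ^ n ≤ (s n).1.1 := by
    intro n
    induction n with
    | zero => have := hbigN 0; simpa using by omega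
    | succ n ih =>
      rw [hs, hF1]
      have := hbigN n
      calc 2 ^ (n + 1) = 2 ^ n * 2 := by ring
        _ ≤ (s n).1.1 * (s n).1.1 := Nat.mul_le_mul ih (by omega)
        _ = (s n).1.1 ^ 2 := by ring
        _ ≤ _ := Nat.pow_le_pow_right (by omega) (by norm_num)
  have hinv : ∀ n, 1 / ((s n).1.1 : ℝ) ≤ (1 / 2) ^ n := fun n => by
    rw [one_div_pow]
    apply one_div_le_one_div_of_le (by positivity)
    exact_mod_cast h2n n
  have hWc : ∀ n, ContDiff ℝ l (W n) := fun n => by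
    obtain ⟨⟨G, hG, -⟩, -⟩ := (s n).2.2
    exact hG.Wc
  have hWp : ∀ n, Function.Periodic (W n) 1 := fun n => by
    obtain ⟨⟨G, hG, -⟩, -⟩ := (s n).2.2
    exact hG.Wp
  have hWW : ∀ n, ∀ i ≤ l, ∀ x,
      |iteratedDeriv i (fun y => W (n + 1) y - W n y) x| ≤ (1 / 2) ^ n := fun n i hi x =>
    (hF5 (s n) i hi x).trans (hinv n)
  have hVW : ∀ n, ∀ i ≤ l, ∀ x,
      |iteratedDeriv i (fun y => V n y - W (n + 1) y) x| ≤ (1 / 2) ^ n := fun n i hi x =>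
    (hF4 (s n) i hi x).trans (hinv n)
  obtain ⟨v, hv, hlim, hvW⟩ := Cl_limit hWc hWW
  have hvp : Function.Periodic v 1 := fun x => by
    have h1 := hlim (x + 1)
    simp only [fun n => hWp n x] at h1
    exact tendsto_nhds_unique h1 (hlim x)
  refine ⟨v, V, hvp, hv, fun n => hF2 _, ?_, fun n => hF3 _, ?_⟩
  · obtain ⟨C, hC⟩ := (hvp.isBounded_of_continuous one_ne_zero hv.continuous).exists_norm_le
    refine LE_limit (W := W) (B := C + 2) (fun n => (hWc n).continuous) hv.continuous hvp ?_ hlim ?_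
    · intro n x
      have h1 := hvW n 0 (Nat.zero_le _) x
      have h2 := hC (v x) ⟨x, rfl⟩
      have h3 : ((1:ℝ) / 2) ^ n ≤ 1 := pow_le_one₀ (by norm_num) (by norm_num)
      rw [iteratedDeriv_zero] at h1
      rw [Real.norm_eq_abs] at h2
      have h4 := abs_sub_abs_le_abs_sub (W n x) (v x)
      rw [abs_sub_comm] at h4
      linarith
    · intro n m hm
      obtain ⟨-, h1⟩ := (s n).2.2
      refine LEn_ge_of_dir (hWc n).continuous hm (h1 m).1 (le_trans ?_ (h1 m).2)
      have : (0:ℝ) ≤ 2 / (s n).1.1 := by positivity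
      gcongr
      linarith
  · intro ε hε
    obtain ⟨N, hN⟩ := exists_pow_lt_of_lt_one (by positivity : 0 < ε / 2)
      (by norm_num : (1:ℝ) / 2 < 1)
    refine ⟨N, fun n hn j hj x => ?_⟩
    have e : (fun y => V n y - v y) =
        fun y => (V n y - W (n + 1) y) - (v y - W (n + 1) y) := by funext y; ring
    have hjl : ((j:ℕ) : WithTop ℕ∞) ≤ (l : WithTop ℕ∞) := by exact_mod_cast hj
    have c1 : ContDiffAt ℝ j (fun y => V n y - W (n + 1) y) x :=
      (((show ContDiff ℝ l (V n) from (hF2 (s n)).2).sub (hWc (n + 1))).of_le hjl).contDiffAt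
    have c2 : ContDiffAt ℝ j (fun y => v y - W (n + 1) y) x :=
      ((hv.sub (hWc (n + 1))).of_le hjl).contDiffAt
    rw [e, iteratedDeriv_fun_sub c1 c2]
    have h1 := hVW n j hj x
    have h2 := hvW (n + 1) j hj x
    have h3 : ((1:ℝ) / 2) ^ n ≤ (1 / 2) ^ N := pow_le_pow_of_le_one (by norm_num) (by norm_num) hn
    rw [pow_succ] at h2
    have h4 := abs_sub (iteratedDeriv j (fun y => V n y - W (n + 1) y) x)
      (iteratedDeriv j (fun y => v y - W (n + 1) y) x)
    linarith
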